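/- Let (ρ, u) be a weak solution of the stationary isentropic Navier–Stokes system on ℝ³ with exponent γ ≥ 6 and potential G ∈ D₀^{1,q}(ℝ³) for some q with 6γ/(5γ−6) ≤ q ≤ 3/2. If ρ ∈ L⁶(ℝ³) ∩ L^γ(ℝ³), then u = 0 almost everywhere. -/

import Mathlib

noncomputable section

open MeasureTheory Metric Filter Topology Set

/-- Three-dimensional Euclidean space. -/
abbrev E3 : Type := EuclideanSpace ℝ (Fin 3)

/-- Partial derivative of a scalar function in the `i`-th coordinate direction. -/
def pd (f : E3 → ℝ) (i : Fin 3) : E3 → ℝ :=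
  fun x => fderiv ℝ f x (EuclideanSpace.single i 1)

/-- Classical gradient matrix of a vector field: `(tgrad φ x) i j = ∂_j φ_i (x)`. -/
def tgrad (φ : E3 → Fin 3 → ℝ) (x : E3) : Fin 3 → Fin 3 → ℝ :=
  fun i j => pd (fun y => φ y i) j x

/-- Smooth compactly supported scalar test function with support in `Ω`. -/
def IsTest (Ω : Set E3) (φ : E3 → ℝ) : Prop :=
  ContDiff ℝ ((⊤ : ℕ∞) : WithTop ℕ∞) φ ∧ HasCompactSupport φ ∧ tsupport φ ⊆ Ω

/-- `C^n` compactly supported vector-valued test function with support in `Ω`. -/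
def IsTestVec (n : WithTop ℕ∞) (Ω : Set E3) (φ : E3 → Fin 3 → ℝ) : Prop :=
  ContDiff ℝ n φ ∧ HasCompactSupport φ ∧ tsupport φ ⊆ Ω

/-- The Newtonian viscous stress tensor
`S(M) = μ (M + Mᵗ - (2/3) (tr M) I) + η (tr M) I`. -/
def Smat (μ η : ℝ) (M : Fin 3 → Fin 3 → ℝ) : Fin 3 → Fin 3 → ℝ :=
  fun i j =>
    μ * (M i j + M j i - (2 / 3) * (∑ k, M k k) * (if i = j then (1 : ℝ) else 0))
      + η * (∑ k, M k k) * (if i = j then (1 : ℝ) else 0)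

/-- `dG` is the weak gradient of the scalar function `G` on `Ω`. -/
def HasWeakGradOn (Ω : Set E3) (G : E3 → ℝ) (dG : E3 → Fin 3 → ℝ) : Prop :=
  ∀ φ : E3 → ℝ, IsTest Ω φ → ∀ i : Fin 3,
    ∫ x in Ω, G x * pd φ i x = - ∫ x in Ω, dG x i * φ x

/-- `du` is the weak gradient (Jacobian) of the vector field `u` on `Ω`. -/
def HasWeakGradVecOn (Ω : Set E3) (u : E3 → Fin 3 → ℝ) (du : E3 → Fin 3 → Fin 3 → ℝ) : Prop :=
  ∀ φ : E3 → ℝ, IsTest Ω φ → ∀ i j : Fin 3,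
    ∫ x in Ω, u x i * pd φ j x = - ∫ x in Ω, du x i j * φ x

/-- `u ∈ D₀^{1,2}(Ω; ℝ³)` with weak gradient `du`: `u` is locally integrable on `Ω`, its weak
gradient belongs to `L²(Ω)`, and `u` can be approximated by smooth compactly supported fields
`uₙ` with `∇uₙ → ∇u` in `L²(Ω)` and `uₙ → u` in `L⁶(Ω)`. -/
def MemD012 (Ω : Set E3) (u : E3 → Fin 3 → ℝ) (du : E3 → Fin 3 → Fin 3 → ℝ) : Prop :=
  LocallyIntegrableOn u Ω volume ∧
  HasWeakGradVecOn Ω u du ∧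
  MemLp du 2 (volume.restrict Ω) ∧
  ∃ un : ℕ → E3 → Fin 3 → ℝ,
    (∀ n, IsTestVec ((⊤ : ℕ∞) : WithTop ℕ∞) Ω (un n)) ∧
    Tendsto (fun n => eLpNorm (fun x => tgrad (un n) x - du x) 2 (volume.restrict Ω))
      atTop (𝓝 0) ∧
    Tendsto (fun n => eLpNorm (fun x => un n x - u x) 6 (volume.restrict Ω)) atTop (𝓝 0)

/-- `G ∈ D₀^{1,q}(Ω)` with weak gradient `dG`. -/
def MemD01q (Ω : Set E3) (G : E3 → ℝ) (dG : E3 → Fin 3 → ℝ) (q : ℝ) : Prop :=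
  HasWeakGradOn Ω G dG ∧
  MemLp dG (ENNReal.ofReal q) (volume.restrict Ω) ∧
  ∃ Gn : ℕ → E3 → ℝ,
    (∀ n, IsTest Ω (Gn n)) ∧
    Tendsto (fun n =>
        eLpNorm (fun x => (fun i => pd (Gn n) i x) - dG x) (ENNReal.ofReal q)
          (volume.restrict Ω)) atTop (𝓝 0) ∧
    ∀ K : Set E3, IsCompact K → K ⊆ Ω →
      Tendsto (fun n => ∫ x in K, |Gn n x - G x|) atTop (𝓝 0)

/-- `G ∈ W^{1,∞}(Ω)` with weak gradient `dG`: both `G` and `∇G` are essentially bounded. -/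
def MemW1inf (Ω : Set E3) (G : E3 → ℝ) (dG : E3 → Fin 3 → ℝ) : Prop :=
  HasWeakGradOn Ω G dG ∧
  MemLp G ⊤ (volume.restrict Ω) ∧ MemLp dG ⊤ (volume.restrict Ω)

/-- Weak solution `(ρ, u)` (with weak gradient `du` of `u` and weak gradient `dG` of `G`) of the
stationary barotropic Navier–Stokes system
`div(ρu) = 0`, `div(ρ u⊗u) + ∇p(ρ) − div S(∇u) = ρ∇G` on `Ω` with no-slip boundary condition. -/
structure WeakSolution (Ω : Set E3) (μ η : ℝ) (p : ℝ → ℝ)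
    (G : E3 → ℝ) (dG : E3 → Fin 3 → ℝ)
    (ρ : E3 → ℝ) (u : E3 → Fin 3 → ℝ) (du : E3 → Fin 3 → Fin 3 → ℝ) : Prop where
  aemeas_ρ : AEMeasurable ρ volume
  aemeas_u : AEMeasurable u volume
  weakGrad_G : HasWeakGradOn Ω G dG
  ρ_nonneg : ∀ᵐ x ∂(volume.restrict Ω), 0 ≤ ρ x
  ρu_locInt : LocallyIntegrableOn (fun x => fun i => ρ x * u x i) (closure Ω) volume
  mass : ∀ φ : E3 → ℝ, ContDiff ℝ ((⊤ : ℕ∞) : WithTop ℕ∞) φ → HasCompactSupport φ →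
    ∫ x in Ω, ρ x * (∑ i, u x i * pd φ i x) = 0
  ρ_locInt : LocallyIntegrableOn ρ Ω volume
  ρu2_locInt : LocallyIntegrableOn (fun x => ρ x * (∑ i, (u x i) ^ 2)) Ω volume
  pρ_locInt : LocallyIntegrableOn (fun x => p (ρ x)) Ω volume
  ρdG_locInt : LocallyIntegrableOn (fun x => fun i => ρ x * dG x i) Ω volume
  u_D012 : MemD012 Ω u du
  momentum : ∀ φ : E3 → Fin 3 → ℝ, IsTestVec 1 Ω φ →
    ∫ x in Ω, ((∑ i, ∑ j, ρ x * u x i * u x j * tgrad φ x i j)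
        + p (ρ x) * (∑ i, tgrad φ x i i))
      = (∫ x in Ω, ∑ i, ∑ j, Smat μ η (du x) i j * tgrad φ x i j)
        - ∫ x in Ω, ∑ i, ρ x * dG x i * φ x i

/-- Weak solution of the stationary isentropic Navier–Stokes system on `ℝ³`
with pressure `p(ρ) = ρ^γ`. -/
def IsentropicWeakSolution (μ η γ : ℝ) (G : E3 → ℝ) (dG : E3 → Fin 3 → ℝ)
    (ρ : E3 → ℝ) (u : E3 → Fin 3 → ℝ) (du : E3 → Fin 3 → Fin 3 → ℝ) : Prop :=
  WeakSolution univ μ η (fun s => s ^ γ) G dG ρ u du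

/-- The `L^r` norm of a scalar function on a set. -/
def lpNormOn (f : E3 → ℝ) (r : ℝ) (s : Set E3) : ℝ :=
  (∫ x in s, |f x| ^ r) ^ (1 / r)

/-- Euclidean norm of a vector in `ℝ³` (represented as `Fin 3 → ℝ`). -/
def vnorm (v : Fin 3 → ℝ) : ℝ := Real.sqrt (∑ i, (v i) ^ 2)

/-- The `L^r` norm of a vector field on a set. -/
def vecLpNormOn (u : E3 → Fin 3 → ℝ) (r : ℝ) (s : Set E3) : ℝ :=
  (∫ x in s, (vnorm (u x)) ^ r) ^ (1 / r)

/-- The exponent `f(α, γ)` from the higher-integrability propositions. -/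
def fExp (α γ : ℝ) : ℝ :=
  if 6 ≤ γ then
    (if (2 * γ - 3) / (γ * (γ - 1)) ≤ α then α - 3 / (2 * γ)
     else α / γ + 1 / (2 * γ) - 3 / γ ^ 2)
  else
    (if 3 / (2 * (γ - 1)) ≤ α then α - 3 / (2 * γ)
     else if 1 / (2 * (γ - 1)) ≤ α then α / γ
     else α / γ ^ 2 + 1 / (2 * γ ^ 2))

/-- The exponent `g(α, β, γ)`. -/
def gExp (α β γ : ℝ) : ℝ :=
  if fExp α γ ≤ (γ - 3) / (γ * (3 * γ - 5)) then
    γ * (1 - fExp α γ) * (6 - β) / (3 * β * (γ - 1))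
  else (1 - γ * fExp α γ) * (6 - β) / (2 * β)

/-!
Test the momentum equation with `u` itself. By Hölder `ρ u ⊗ u ∈ L²` and `ρ ∇G ∈ L^{6/5}`, so taking
the divergence of the momentum equation and inverting the Laplacian upgrades `ρ^γ ∈ L¹` to
`ρ^γ ∈ L²`; all terms then pair with `∇u ∈ L²` and `u ∈ L⁶`, and approximating `u` justifies the
test. The continuity equation tested with `|u|²` and `G` kills the convective term and the work of
the force. It also kills the pressure term: since `ρ ∈ L⁶` and `∇u ∈ L²`, mollification shows that
`div (b(ρ) u) + (ρ b'(ρ) - b(ρ)) div u = 0` integrates to `∫ (ρ b'(ρ) - b(ρ)) div u = 0` when `b''`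
is a truncation of `γ s^{γ-2}`, and removing the truncation gives `∫ ρ^γ div u = 0`. What is left is
`0 = ∫ S(∇u) : ∇u = μ ∫ |∇u|² + (η + μ/3) ∫ (div u)²`, so `∇u = 0`, and `u = 0` by Sobolev.
-/

open scoped ENNReal NNReal Convolution

/-! ### Convergence in `L^p` and Hölder's inequality -/

section TendstoInLp

variable {α ι : Type*} [MeasurableSpace α] {m : Measure α} {l : Filter ι} {p q r : ℝ≥0∞}

/-- `L^p` convergence of a family of honest functions along a filter, bundled with membership of
the family and its limit in `L^p`; unlike convergence in `Lp`, no passage to classes is needed. -/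
structure TendstoInLp (p : ℝ≥0∞) (m : Measure α) (fn : ι → α → ℝ) (l : Filter ι) (f : α → ℝ) :
    Prop where
  memLp : ∀ n, MemLp (fn n) p m
  memLp_lim : MemLp f p m
  tendsto : Tendsto (fun n => eLpNorm (fun x => fn n x - f x) p m) l (𝓝 0)

lemma eLpNorm_mul_le_mul_eLpNorm [ENNReal.HolderTriple p q r] {f g : α → ℝ}
    (hf : AEStronglyMeasurable f m) (hg : AEStronglyMeasurable g m) :
    eLpNorm (fun x => f x * g x) r m ≤ eLpNorm f p m * eLpNorm g q m :=
  eLpNorm_smul_le_mul_eLpNorm (φ := f) (f := g) hg hf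

namespace TendstoInLp

variable {fn gn : ι → α → ℝ} {f g : α → ℝ}

lemma const (hf : MemLp f p m) : TendstoInLp p m (fun _ => f) l f where
  memLp _ := hf
  memLp_lim := hf
  tendsto := by simpa using tendsto_const_nhds

lemma of_le {ε : ι → ℝ≥0∞} (hfn : ∀ n, MemLp (fn n) p m) (hf : MemLp f p m)
    (hε : Tendsto ε l (𝓝 0)) (h : ∀ n, eLpNorm (fun x => fn n x - f x) p m ≤ ε n) :
    TendstoInLp p m fn l f :=
  ⟨hfn, hf, tendsto_of_tendsto_of_tendsto_of_le_of_le tendsto_const_nhds hε (fun _ => zero_le) h⟩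

lemma mul [ENNReal.HolderTriple p q r] (hr : 1 ≤ r) (hf : TendstoInLp p m fn l f)
    (hg : TendstoInLp q m gn l g) :
    TendstoInLp r m (fun n x => fn n x * gn n x) l (fun x => f x * g x) := by
  have hq : 1 ≤ q := hr.trans (ENNReal.HolderTriple.le q p r)
  have hε : Tendsto (fun n => eLpNorm (fun x => fn n x - f x) p m *
      (eLpNorm (fun x => gn n x - g x) q m + eLpNorm g q m) +
      eLpNorm f p m * eLpNorm (fun x => gn n x - g x) q m) l (𝓝 0) := by
    have left := ENNReal.Tendsto.mul hf.tendsto (.inr (by finiteness [hg.memLp_lim.2.ne]))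
      (hg.tendsto.add_const (eLpNorm g q m)) (.inr ENNReal.zero_ne_top)
    have right := ENNReal.Tendsto.const_mul hg.tendsto (.inr hf.memLp_lim.2.ne)
    simpa using left.add right
  refine of_le (fun n => (hg.memLp n).mul (hf.memLp n)) (hg.memLp_lim.mul hf.memLp_lim) hε
    fun n => ?_
  have df : AEStronglyMeasurable (fun x => fn n x - f x) m := (hf.memLp n).1.sub hf.memLp_lim.1
  have dg : AEStronglyMeasurable (fun x => gn n x - g x) m := (hg.memLp n).1.sub hg.memLp_lim.1
  have gn_le : eLpNorm (gn n) q m ≤ eLpNorm (fun x => gn n x - g x) q m + eLpNorm g q m := by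
    simpa [Pi.add_def] using eLpNorm_add_le dg hg.memLp_lim.1 hq
  calc eLpNorm (fun x => fn n x * gn n x - f x * g x) r m
      = eLpNorm ((fun x => (fn n x - f x) * gn n x) + fun x => f x * (gn n x - g x)) r m := by
        congr 1; ext x; simp only [Pi.add_apply]; ring
    _ ≤ eLpNorm (fun x => (fn n x - f x) * gn n x) r m +
          eLpNorm (fun x => f x * (gn n x - g x)) r m :=
        eLpNorm_add_le (df.mul (hg.memLp n).1) (hf.memLp_lim.1.mul dg) hr
    _ ≤ eLpNorm (fun x => fn n x - f x) p m * eLpNorm (gn n) q m +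
          eLpNorm f p m * eLpNorm (fun x => gn n x - g x) q m :=
        add_le_add (eLpNorm_mul_le_mul_eLpNorm df (hg.memLp n).1)
          (eLpNorm_mul_le_mul_eLpNorm hf.memLp_lim.1 dg)
    _ ≤ _ := by gcongr

lemma integral (h : TendstoInLp 1 m fn l f) :
    Tendsto (fun n => ∫ x, fn n x ∂m) l (𝓝 (∫ x, f x ∂m)) :=
  tendsto_integral_of_L1' f h.memLp_lim.1
    (Eventually.of_forall fun n => memLp_one_iff_integrable.1 (h.memLp n)) h.tendsto

lemma integral_mul [ENNReal.HolderTriple p q 1] (hf : TendstoInLp p m fn l f)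
    (hg : TendstoInLp q m gn l g) :
    Tendsto (fun n => ∫ x, fn n x * gn n x ∂m) l (𝓝 (∫ x, f x * g x ∂m)) :=
  (hf.mul le_rfl hg).integral

end TendstoInLp

lemma enorm_integral_mul_le_mul_eLpNorm [ENNReal.HolderTriple p q 1] {f g : α → ℝ}
    (hf : AEStronglyMeasurable f m) (hg : AEStronglyMeasurable g m) :
    ‖∫ x, f x * g x ∂m‖ₑ ≤ eLpNorm f p m * eLpNorm g q m := by
  refine (enorm_integral_le_lintegral_enorm _).trans ?_
  rw [← eLpNorm_one_eq_lintegral_enorm]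
  exact eLpNorm_mul_le_mul_eLpNorm hf hg

lemma abs_integral_mul_le_mul_eLpNorm [ENNReal.HolderTriple p q 1] {f g : α → ℝ}
    (hf : MemLp f p m) (hg : MemLp g q m) :
    |∫ x, f x * g x ∂m| ≤ (eLpNorm f p m).toReal * (eLpNorm g q m).toReal := by
  rw [← Real.norm_eq_abs, ← toReal_enorm, ← ENNReal.toReal_mul]
  exact ENNReal.toReal_mono (by finiteness [hf.2.ne, hg.2.ne])
    (enorm_integral_mul_le_mul_eLpNorm hf.1 hg.1)

lemma toReal_eLpNorm_two_sq {f : α → ℝ} (hf : MemLp f 2 m) :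
    (eLpNorm f 2 m).toReal ^ 2 = ∫ x, f x ^ 2 ∂m := by
  rw [hf.eLpNorm_eq_integral_rpow_norm (by norm_num) (by norm_num),
    ENNReal.toReal_ofReal (by positivity), ← Real.rpow_natCast, ← Real.rpow_mul (by positivity)]
  norm_num

lemma memLp_of_exponent_le_of_le {f : α → ℝ} (hpr : p ≤ r) (hrq : r ≤ q) (hp0 : p ≠ 0)
    (hq : q ≠ ∞) (hfp : MemLp f p m) (hfq : MemLp f q m) : MemLp f r m := by
  have hr : r ≠ ∞ := ne_top_of_le_ne_top hq hrq
  have hr0 : r ≠ 0 := (pos_iff_ne_zero.2 hp0).trans_le hpr |>.ne'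
  refine ⟨hfp.1, (eLpNorm_lt_top_iff_lintegral_rpow_enorm_lt_top hr0 hr).2 ?_⟩
  have ip := (eLpNorm_lt_top_iff_lintegral_rpow_enorm_lt_top hp0
    (ne_top_of_le_ne_top hr hpr)).1 hfp.2
  have iq := (eLpNorm_lt_top_iff_lintegral_rpow_enorm_lt_top
    ((pos_iff_ne_zero.2 hr0).trans_le hrq).ne' hq).1 hfq.2
  refine lt_of_le_of_lt (lintegral_mono fun x => ?_)
    ((lintegral_add_left' (hfp.1.enorm.pow_const _) _).trans_lt (ENNReal.add_lt_top.2 ⟨ip, iq⟩))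
  rcases le_total ‖f x‖ₑ 1 with h | h
  · exact (ENNReal.rpow_le_rpow_of_exponent_ge h (ENNReal.toReal_mono hr hpr)).trans le_self_add
  · exact (ENNReal.rpow_le_rpow_of_exponent_le h (ENNReal.toReal_mono hq hrq)).trans le_add_self

end TendstoInLp

instance : ENNReal.HolderTriple 6 6 3 := .of_toReal (by constructor <;> norm_num)
instance : ENNReal.HolderTriple 6 3 2 := .of_toReal (by constructor <;> norm_num)
instance : ENNReal.HolderTriple 6 2 (3 / 2) := .of_toReal (by constructor <;> norm_num)
instance : ENNReal.HolderTriple 3 (3 / 2) 1 := .of_toReal (by constructor <;> norm_num)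
instance : ENNReal.HolderTriple 6 (3 / 2) (6 / 5) := .of_toReal (by constructor <;> norm_num)
instance : ENNReal.HolderTriple 6 (6 / 5) 1 := .of_toReal (by constructor <;> norm_num)

/-! ### Partial derivatives and test functions -/

section PartialDerivatives

variable {f g : E3 → ℝ}

lemma contDiff_pd {n k : WithTop ℕ∞} (hf : ContDiff ℝ n f) (h : k + 1 ≤ n) (i : Fin 3) :
    ContDiff ℝ k (pd f i) :=
  (hf.fderiv_right h).clm_apply contDiff_const

lemma continuous_pd (hf : ContDiff ℝ 1 f) (i : Fin 3) : Continuous (pd f i) :=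
  (contDiff_pd (k := 0) hf (by simp) i).continuous

lemma hasCompactSupport_pd (hf : HasCompactSupport f) (i : Fin 3) :
    HasCompactSupport (pd f i) :=
  hf.fderiv_apply ℝ _

lemma pd_mul (hf : ContDiff ℝ 1 f) (hg : ContDiff ℝ 1 g) (i : Fin 3) (x : E3) :
    pd (fun y => f y * g y) i x = f x * pd g i x + g x * pd f i x := by
  simp [pd, fderiv_fun_mul (hf.differentiable one_ne_zero x) (hg.differentiable one_ne_zero x)]

lemma pd_comp {h h' : ℝ → ℝ} (hh : ∀ s, HasDerivAt h (h' s) s) (hf : ContDiff ℝ 1 f)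
    (i : Fin 3) (x : E3) : pd (fun y => h (f y)) i x = h' (f x) * pd f i x := by
  have h : HasFDerivAt (fun y => h (f y)) _ x :=
    (hh (f x)).comp_hasFDerivAt x (hf.differentiable one_ne_zero x).hasFDerivAt
  simp [pd, h.fderiv]

lemma pd_comp_sub_left (hf : ContDiff ℝ 1 f) (x : E3) (i : Fin 3) (t : E3) :
    pd (fun y => f (x - y)) i t = - pd f i (x - t) := by
  have h : HasFDerivAt (fun y => f (x - y)) _ t :=
    (hf.differentiable one_ne_zero (x - t)).hasFDerivAt.comp t ((hasFDerivAt_id t).const_sub x)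
  simp [pd, h.fderiv]

lemma pd_comm (hf : ContDiff ℝ 2 f) (i j : Fin 3) (x : E3) :
    pd (pd f i) j x = pd (pd f j) i x := by
  have hsymm : IsSymmSndFDerivAt ℝ f x := hf.contDiffAt.isSymmSndFDerivAt (by simp)
  have hd : DifferentiableAt ℝ (fderiv ℝ f) x :=
    (hf.fderiv_right (m := 1) (by norm_num)).differentiable one_ne_zero x
  have pd_pd_eq (a b : Fin 3) : pd (pd f a) b x = fderiv ℝ (fderiv ℝ f) x
      (EuclideanSpace.single b 1) (EuclideanSpace.single a 1) := by
    have : HasFDerivAt (pd f a) _ x := hd.hasFDerivAt.clm_apply (hasFDerivAt_const _ x)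
    rw [pd, this.fderiv]
    simp
  rw [pd_pd_eq, pd_pd_eq, hsymm]

lemma integral_mul_pd_eq_neg (hf : ContDiff ℝ 1 f) (hg : ContDiff ℝ 1 g) (i : Fin 3)
    (hf'g : Integrable fun x => pd f i x * g x) (hfg' : Integrable fun x => f x * pd g i x)
    (hfg : Integrable fun x => f x * g x) :
    ∫ x, f x * pd g i x = - ∫ x, pd f i x * g x :=
  integral_mul_fderiv_eq_neg_fderiv_mul_of_integrable hf'g hfg' hfg
    (fun x _ => hf.differentiable one_ne_zero x) (fun x _ => hg.differentiable one_ne_zero x)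

lemma integral_mul_pd_eq_neg_of_hasCompactSupport (hf : ContDiff ℝ 1 f) (hg : ContDiff ℝ 1 g)
    (h : HasCompactSupport f) (i : Fin 3) :
    ∫ x, f x * pd g i x = - ∫ x, pd f i x * g x :=
  integral_mul_pd_eq_neg hf hg i
    (((continuous_pd hf i).mul hg.continuous).integrable_of_hasCompactSupport
      (hasCompactSupport_pd h i).mul_right)
    ((hf.continuous.mul (continuous_pd hg i)).integrable_of_hasCompactSupport h.mul_right)
    ((hf.continuous.mul hg.continuous).integrable_of_hasCompactSupport h.mul_right)

lemma integral_pd_mul_pd_swap (hf : ContDiff ℝ 1 f) (hg : ContDiff ℝ 2 g)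
    (h : HasCompactSupport f) (i j : Fin 3) :
    ∫ x, pd f j x * pd g i x = ∫ x, pd f i x * pd g j x := by
  have hpd (a : Fin 3) : ContDiff ℝ 1 (pd g a) := contDiff_pd hg (by norm_num) a
  rw [← neg_inj, ← integral_mul_pd_eq_neg_of_hasCompactSupport hf (hpd i) h j,
    ← integral_mul_pd_eq_neg_of_hasCompactSupport hf (hpd j) h i]
  simp only [pd_comm hg i j]

variable {Ω : Set E3}

lemma IsTest.contDiff (hf : IsTest Ω f) (n : ℕ) : ContDiff ℝ n f :=
  hf.1.of_le (WithTop.coe_le_coe.2 le_top)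

lemma IsTest.contDiff_one (hf : IsTest Ω f) : ContDiff ℝ 1 f := hf.contDiff 1

lemma IsTest.contDiff_two (hf : IsTest Ω f) : ContDiff ℝ 2 f := hf.contDiff 2

lemma IsTest.pd (hf : IsTest Ω f) (i : Fin 3) : IsTest Ω (pd f i) :=
  ⟨contDiff_pd hf.1 le_rfl i, hasCompactSupport_pd hf.2.1 i,
    (tsupport_fderiv_apply_subset ℝ _).trans hf.2.2⟩

lemma IsTest.memLp (hf : IsTest Ω f) (p : ℝ≥0∞) : MemLp f p :=
  hf.1.continuous.memLp_of_hasCompactSupport hf.2.1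

lemma IsTest.mul (hf : IsTest Ω f) (hg : IsTest Ω g) : IsTest Ω fun x => f x * g x :=
  ⟨hf.1.mul hg.1, hf.2.1.mul_right, (tsupport_mul_subset_left (g := g)).trans hf.2.2⟩

lemma IsTest.comp_sub_left (hf : IsTest univ f) (x : E3) : IsTest univ fun y => f (x - y) :=
  ⟨hf.1.comp (contDiff_const.sub contDiff_id),
    hf.2.1.comp_homeomorph (Homeomorph.subLeft x), subset_univ _⟩

end PartialDerivatives

/-! ### The Sobolev inequality -/

lemma norm_fderiv_le_sum_abs_pd (f : E3 → ℝ) (x : E3) :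
    ‖fderiv ℝ f x‖ ≤ ∑ i, |pd f i x| := by
  refine ContinuousLinearMap.opNorm_le_bound _ (by positivity) fun v => ?_
  have hv : v = ∑ i, v i • EuclideanSpace.single i (1 : ℝ) := by
    simpa using ((EuclideanSpace.basisFun (Fin 3) ℝ).sum_repr v).symm
  conv_lhs => rw [hv]
  rw [map_sum, Finset.sum_mul]
  refine (norm_sum_le _ _).trans (Finset.sum_le_sum fun i _ => ?_)
  rw [map_smul, norm_smul, mul_comm]
  exact mul_le_mul_of_nonneg_left (PiLp.norm_apply_le v i) (abs_nonneg _)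

lemma eLpNorm_fderiv_le_sum_eLpNorm_pd {v : E3 → ℝ} (hv : ContDiff ℝ 1 v) {p : ℝ≥0∞}
    (hp : 1 ≤ p) : eLpNorm (fderiv ℝ v) p volume ≤ ∑ i, eLpNorm (pd v i) p volume :=
  calc eLpNorm (fderiv ℝ v) p volume
      ≤ eLpNorm (∑ i, fun x => |pd v i x|) p volume :=
        eLpNorm_mono_real fun x => by simpa using norm_fderiv_le_sum_abs_pd v x
    _ ≤ ∑ i, eLpNorm (fun x => |pd v i x|) p volume :=
        eLpNorm_sum_le (fun i _ => (continuous_pd hv i).abs.aestronglyMeasurable) hp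
    _ = ∑ i, eLpNorm (pd v i) p volume :=
        Finset.sum_congr rfl fun i _ => eLpNorm_norm (pd v i)

lemma exists_eLpNorm_six_le_sum_eLpNorm_pd : ∃ C : ℝ≥0, ∀ v : E3 → ℝ, ContDiff ℝ 1 v →
    HasCompactSupport v → eLpNorm v 6 volume ≤ C * ∑ i, eLpNorm (pd v i) 2 volume := by
  refine ⟨SNormLESNormFDerivOfEqConst ℝ (volume : Measure E3) 2, fun v hv hc => ?_⟩
  have sobolev : eLpNorm v 6 volume ≤ _ * eLpNorm (fderiv ℝ v) 2 volume :=
    eLpNorm_le_eLpNorm_fderiv_of_eq (p := 2) (p' := 6) volume hv hc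
      (by norm_num) (by simp) (by simp; norm_num)
  exact sobolev.trans (mul_le_mul_right (eLpNorm_fderiv_le_sum_eLpNorm_pd hv (by norm_num)) _)

/-! ### Minkowski's integral inequality -/

section Minkowski

variable {α β : Type*} [MeasurableSpace α] [MeasurableSpace β] {m : Measure α} {ν : Measure β}
  {p : ℝ≥0∞}

lemma lintegral_rpow_le_measure_univ_rpow_mul_lintegral_rpow [IsFiniteMeasure ν] {s : ℝ}
    (hs : 1 ≤ s) {g : β → ℝ≥0∞} (hg : AEMeasurable g ν) :
    (∫⁻ z, g z ∂ν) ^ s ≤ ν univ ^ (s - 1) * ∫⁻ z, g z ^ s ∂ν := by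
  have hs0 : 0 < s := by linarith
  have holder := eLpNorm_le_eLpNorm_mul_rpow_measure_univ (μ := ν) (p := 1)
    (q := ENNReal.ofReal s) (by simpa using hs) hg.aestronglyMeasurable
  rw [eLpNorm_one_eq_lintegral_enorm,
    eLpNorm_eq_lintegral_rpow_enorm_toReal (by simpa using hs0) (by simp)] at holder
  simp only [enorm_eq_self, ENNReal.toReal_one, ENNReal.toReal_ofReal hs0.le] at holder
  calc (∫⁻ z, g z ∂ν) ^ s
      ≤ ((∫⁻ z, g z ^ s ∂ν) ^ (1 / s) * ν univ ^ (1 / 1 - 1 / s)) ^ s := by gcongr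
    _ = ν univ ^ (s - 1) * ∫⁻ z, g z ^ s ∂ν := by
      rw [ENNReal.mul_rpow_of_nonneg _ _ hs0.le, ← ENNReal.rpow_mul, ← ENNReal.rpow_mul, mul_comm,
        one_div_mul_cancel hs0.ne', ENNReal.rpow_one, sub_mul, one_div_mul_cancel hs0.ne']
      simp

lemma eLpNorm_lintegral_le [SFinite m] [IsFiniteMeasure ν] (hp : 1 ≤ p) (hp' : p ≠ ∞)
    {F : α → β → ℝ≥0∞} (hF : AEMeasurable (Function.uncurry F) (m.prod ν)) {K : ℝ≥0∞}
    (hK : ∀ᵐ z ∂ν, eLpNorm (fun x => F x z) p m ≤ K) :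
    eLpNorm (fun x => ∫⁻ z, F x z ∂ν) p m ≤ ν univ * K := by
  have hp0 : p ≠ 0 := (zero_lt_one.trans_le hp).ne'
  have hs : 1 ≤ p.toReal := by simpa using ENNReal.toReal_mono hp' hp
  have hs0 : 0 < p.toReal := by linarith
  have hFs : AEMeasurable (Function.uncurry fun x z => F x z ^ p.toReal) (m.prod ν) :=
    hF.pow_const _
  have power_bound : ∫⁻ x, (∫⁻ z, F x z ∂ν) ^ p.toReal ∂m ≤ (ν univ * K) ^ p.toReal := by
    calc ∫⁻ x, (∫⁻ z, F x z ∂ν) ^ p.toReal ∂m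
        ≤ ∫⁻ x, ν univ ^ (p.toReal - 1) * ∫⁻ z, F x z ^ p.toReal ∂ν ∂m :=
          lintegral_mono_ae <| hF.aestronglyMeasurable.prodMk_left.mono fun x hx =>
            lintegral_rpow_le_measure_univ_rpow_mul_lintegral_rpow hs hx.aemeasurable
      _ = ν univ ^ (p.toReal - 1) * ∫⁻ z, ∫⁻ x, F x z ^ p.toReal ∂m ∂ν := by
          rw [← lintegral_lintegral_swap hFs]
          exact lintegral_const_mul'' _ hFs.lintegral_prod_right'
      _ ≤ ν univ ^ (p.toReal - 1) * ∫⁻ _, K ^ p.toReal ∂ν := by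
          refine mul_le_mul_right (lintegral_mono_ae (hK.mono fun z hz => ?_)) _
          simpa [eLpNorm_eq_lintegral_rpow_enorm_toReal hp0 hp', hs0.ne', ← ENNReal.rpow_mul]
            using ENNReal.rpow_le_rpow hz hs0.le
      _ = (ν univ * K) ^ p.toReal := by
          have split : ν univ ^ (p.toReal - 1) * ν univ = ν univ ^ p.toReal := by
            nth_rewrite 2 [← ENNReal.rpow_one (ν univ)]
            rw [← ENNReal.rpow_add_of_nonneg _ _ (by linarith) zero_le_one, sub_add_cancel]
          rw [lintegral_const, ENNReal.mul_rpow_of_nonneg _ _ hs0.le, mul_comm (K ^ _),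
            ← mul_assoc, split]
  rw [eLpNorm_eq_lintegral_rpow_enorm_toReal hp0 hp']
  simpa [← ENNReal.rpow_mul, hs0.ne'] using
    ENNReal.rpow_le_rpow power_bound (one_div_nonneg.2 hs0.le)

lemma eLpNorm_integral_mul_le [SFinite m] [SFinite ν] (hp : 1 ≤ p) (hp' : p ≠ ∞)
    {w : α → β → ℝ} (hw : AEStronglyMeasurable (Function.uncurry w) (m.prod ν)) {k : β → ℝ}
    (hk : Integrable k ν) {K : ℝ≥0∞} (hK : ∀ z, k z ≠ 0 → eLpNorm (fun x => w x z) p m ≤ K) :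
    eLpNorm (fun x => ∫ z, w x z * k z ∂ν) p m ≤ eLpNorm k 1 ν * K := by
  set κ : Measure β := ν.withDensity fun z => ‖k z‖ₑ
  have hκ : κ univ = eLpNorm k 1 ν := by
    rw [withDensity_apply _ .univ, Measure.restrict_univ, eLpNorm_one_eq_lintegral_enorm]
  have : IsFiniteMeasure κ := isFiniteMeasure_withDensity hk.2.ne
  have hwκ : AEMeasurable (Function.uncurry fun x z => ‖w x z‖ₑ) (m.prod κ) :=
    hw.enorm.mono_ac (Measure.AbsolutelyContinuous.rfl.prod (withDensity_absolutelyContinuous _ _))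
  have hKκ : ∀ᵐ z ∂κ, eLpNorm (fun x => ‖w x z‖ₑ) p m ≤ K := by
    refine (ae_withDensity_iff' hk.1.enorm).2 (ae_of_all _ fun z hz => ?_)
    exact (eLpNorm_enorm fun x => w x z).trans_le (hK z (by simpa using hz))
  calc eLpNorm (fun x => ∫ z, w x z * k z ∂ν) p m
      ≤ eLpNorm (fun x => ∫⁻ z, ‖w x z‖ₑ ∂κ) p m := by
        refine eLpNorm_mono_enorm fun x => (enorm_integral_le_lintegral_enorm _).trans_eq ?_
        rw [lintegral_withDensity_eq_lintegral_mul_non_measurable₀ _ hk.1.enorm (by simp)]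
        simp [mul_comm]
    _ ≤ κ univ * K := eLpNorm_lintegral_le hp hp' hwκ hKκ
    _ = eLpNorm k 1 ν * K := by rw [hκ]

end Minkowski

/-! ### Translations, convolutions and mollifiers -/

section Convolution

variable {E : Type*} [NormedAddCommGroup E] [MeasureSpace E] [BorelSpace E]
  [(volume : Measure E).IsAddHaarMeasure] {p q r : ℝ≥0∞} {h k : E → ℝ}

lemma eLpNorm_comp_sub_right (hh : AEStronglyMeasurable h) (p : ℝ≥0∞) (z : E) :
    eLpNorm (fun x => h (x - z)) p volume = eLpNorm h p volume :=
  eLpNorm_comp_measurePreserving hh (measurePreserving_sub_right volume z)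

variable [ProperSpace E]

lemma tendsto_eLpNorm_comp_sub_right_sub (hp : 1 ≤ p) (hp' : p ≠ ∞) (hh : MemLp h p) :
    Tendsto (fun z : E => eLpNorm (fun x => h (x - z) - h x) p volume) (𝓝 0) (𝓝 0) := by
  have : Fact (1 ≤ p) := ⟨hp⟩
  let shift (z : E) : C(E, E) := ⟨fun x => x - z, by fun_prop⟩
  have shift_cont : Continuous shift := ContinuousMap.continuous_of_continuous_uncurry _ <|
    show Continuous fun y : E × E => y.2 - y.1 by fun_prop
  have shift_mp (z : E) : MeasurePreserving (shift z) volume volume :=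
    measurePreserving_sub_right volume z
  have lim := (continuous_const (y := hh.toLp h) (X := E)).compMeasurePreservingLp
    shift_cont shift_mp hp' |>.tendsto 0
  rw [Lp.tendsto_Lp_iff_tendsto_eLpNorm'] at lim
  refine lim.congr fun z => eLpNorm_congr_ae ?_
  have shift_toLp (z : E) : Lp.compMeasurePreserving (shift z) (shift_mp z) (hh.toLp h) =ᵐ[volume]
      fun x => h (x - z) :=
    (Lp.coeFn_compMeasurePreserving _ (shift_mp z)).trans
      ((shift_mp z).quasiMeasurePreserving.ae_eq_comp hh.coeFn_toLp)
  filter_upwards [shift_toLp z, shift_toLp 0] with x hz h0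
  simp only [Pi.sub_apply, hz, h0, sub_zero]

lemma aestronglyMeasurable_uncurry_comp_sub (hh : AEStronglyMeasurable h) :
    AEStronglyMeasurable (Function.uncurry fun x z : E => h (x - z)) (volume.prod volume) :=
  hh.comp_quasiMeasurePreserving (quasiMeasurePreserving_sub_of_right_invariant volume volume)

lemma integrable_comp_sub_mul (hh : LocallyIntegrable h) (hk : Continuous k)
    (hc : HasCompactSupport k) (x : E) : Integrable fun z => h (x - z) * k z := by
  simpa using (hc.convolutionExists_right (ContinuousLinearMap.lsmul ℝ ℝ) hh hk x).comp_sub_left x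

lemma eLpNorm_convolution_le (hp : 1 ≤ p) (hp' : p ≠ ∞) (hh : AEStronglyMeasurable h)
    (hk : Integrable k) :
    eLpNorm (h ⋆ k) p volume ≤ eLpNorm k 1 volume * eLpNorm h p volume := by
  have eq : (h ⋆ k) = fun x => ∫ z, h (x - z) * k z := funext fun x => convolution_lsmul_swap
  rw [eq]
  exact eLpNorm_integral_mul_le hp hp' (aestronglyMeasurable_uncurry_comp_sub hh) hk
    fun z _ => (eLpNorm_comp_sub_right hh p z).le

lemma eLpNorm_convolution_sub_mul_integral_le (hp : 1 ≤ p) (hp' : p ≠ ∞) (hh : MemLp h p)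
    (hk : Continuous k) (hc : HasCompactSupport k) {K : ℝ≥0∞}
    (hK : ∀ z, k z ≠ 0 → eLpNorm (fun x => h (x - z) - h x) p volume ≤ K) :
    eLpNorm (fun x => (h ⋆ k) x - h x * ∫ z, k z) p volume ≤ eLpNorm k 1 volume * K := by
  have ki : Integrable k := hk.integrable_of_hasCompactSupport hc
  have eq (x : E) : (h ⋆ k) x - h x * ∫ z, k z = ∫ z, (h (x - z) - h x) * k z := by
    simp only [sub_mul]
    rw [integral_sub (integrable_comp_sub_mul (hh.locallyIntegrable hp) hk hc x) (ki.const_mul _),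
      integral_const_mul, convolution_lsmul_swap]
    rfl
  simp only [eq]
  exact eLpNorm_integral_mul_le hp hp'
    ((aestronglyMeasurable_uncurry_comp_sub hh.1).sub hh.1.comp_fst) ki hK

/-- The Friedrichs commutator `(h v) ⋆ k - (h ⋆ k) v` of the multiplication by `v` with the
mollification by `k`. -/
def mollCommutator (h v k : E → ℝ) (x : E) : ℝ := ((fun y => h y * v y) ⋆ k) x - (h ⋆ k) x * v x

lemma eLpNorm_mollCommutator_le [ENNReal.HolderTriple p q r] (hr : 1 ≤ r)
    (hr' : r ≠ ∞) {v : E → ℝ} (hh : MemLp h p) (hv : AEStronglyMeasurable v)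
    (hhv : LocallyIntegrable fun y => h y * v y) (hk : Continuous k) (hc : HasCompactSupport k)
    {K : ℝ≥0∞}
    (hK : ∀ z, k z ≠ 0 → eLpNorm (fun x => v (x - z) - v x) q volume ≤ K) :
    eLpNorm (mollCommutator h v k) r volume
      ≤ eLpNorm k 1 volume * (eLpNorm h p volume * K) := by
  have hp : 1 ≤ p := hr.trans (ENNReal.HolderTriple.le p q r)
  have eq : mollCommutator h v k = fun x => ∫ z, h (x - z) * (v (x - z) - v x) * k z := by
    ext x
    rw [mollCommutator, convolution_lsmul_swap, convolution_lsmul_swap, ← integral_mul_const,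
      ← integral_sub]
    · simp only [smul_eq_mul]
      congr 1; ext z; ring
    · exact integrable_comp_sub_mul hhv hk hc x
    · exact (integrable_comp_sub_mul (hh.locallyIntegrable hp) hk hc x).mul_const _
  have h_shift := aestronglyMeasurable_uncurry_comp_sub hh.1
  have v_shift := aestronglyMeasurable_uncurry_comp_sub hv
  rw [eq]
  refine eLpNorm_integral_mul_le hr hr' (w := fun x z => h (x - z) * (v (x - z) - v x))
    (h_shift.mul (v_shift.sub hv.comp_fst)) (hk.integrable_of_hasCompactSupport hc)
    fun z hz => ?_
  have mp : MeasurePreserving (fun x : E => x - z) volume volume :=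
    measurePreserving_sub_right volume z
  calc eLpNorm (fun x => h (x - z) * (v (x - z) - v x)) r volume
      ≤ eLpNorm (fun x => h (x - z)) p volume * eLpNorm (fun x => v (x - z) - v x) q volume :=
        eLpNorm_mul_le_mul_eLpNorm (hh.1.comp_measurePreserving mp)
          ((hv.comp_measurePreserving mp).sub hv)
    _ ≤ eLpNorm h p volume * K := by
        rw [eLpNorm_comp_sub_right hh.1]
        gcongr
        exact hK z hz

lemma enorm_convolution_le [ENNReal.HolderTriple p q 1] (hh : AEStronglyMeasurable h)
    (hk : AEStronglyMeasurable k) (x : E) :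
    ‖(h ⋆ k) x‖ₑ ≤ eLpNorm h p volume * eLpNorm k q volume := by
  have mp : MeasurePreserving (fun t : E => x - t) volume volume :=
    volume.measurePreserving_sub_left x
  rw [← eLpNorm_comp_measurePreserving hk mp]
  refine (enorm_integral_le_lintegral_enorm _).trans ?_
  rw [← eLpNorm_one_eq_lintegral_enorm]
  exact eLpNorm_mul_le_mul_eLpNorm hh (hk.comp_measurePreserving mp)

lemma tendsto_convolution_cocompact (hp : 1 ≤ p) (hp' : p ≠ ∞) (hh : MemLp h p)
    (hk : Continuous k) (hc : HasCompactSupport k) :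
    Tendsto (h ⋆ k) (cocompact E) (𝓝 0) := by
  have hpq := ENNReal.HolderConjugate.conjExponent hp
  set q := p.conjExponent
  have kq : MemLp k q := hk.memLp_of_hasCompactSupport hc
  rw [tendsto_zero_iff_enorm_tendsto_zero, ENNReal.tendsto_nhds_zero]
  intro ε hε
  obtain ⟨c, hcc, hle, -, hcp⟩ := hh.exists_hasCompactSupport_eLpNorm_sub_le hp'
    (ENNReal.div_pos hε.ne' kq.2.ne).ne'
  have c_zero : ∀ᶠ x in cocompact E, (c ⋆ k) x = 0 := by
    filter_upwards [(hcc.convolution (ContinuousLinearMap.lsmul ℝ ℝ) hc).isCompact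
      |>.compl_mem_cocompact] with x hx
    exact image_eq_zero_of_notMem_tsupport hx
  filter_upwards [c_zero] with x hx
  have eq : (h ⋆ k) x = ((h - c) ⋆ k) x := by
    have h_exists := hc.convolutionExists_right (ContinuousLinearMap.lsmul ℝ ℝ)
      (hh.locallyIntegrable hp) hk x
    have c_exists := hc.convolutionExists_right (ContinuousLinearMap.lsmul ℝ ℝ)
      (hcp.locallyIntegrable hp) hk x
    rw [← sub_zero ((h ⋆ k) x), ← hx, convolution, convolution, ← integral_sub h_exists c_exists]
    simp [convolution]
  calc ‖(h ⋆ k) x‖ₑ ≤ eLpNorm (h - c) p volume * eLpNorm k q volume := by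
        rw [eq]; exact enorm_convolution_le (hh.1.sub hcp.1) kq.1 x
    _ ≤ ε / eLpNorm k q volume * eLpNorm k q volume := by gcongr
    _ ≤ ε := ENNReal.mul_le_of_le_div le_rfl

end Convolution

section Mollifier

variable {h k : E3 → ℝ} {p : ℝ≥0∞}

lemma pd_convolution (hh : LocallyIntegrable h) (hk : ContDiff ℝ 1 k) (hc : HasCompactSupport k)
    (i : Fin 3) : pd (h ⋆ k) i = h ⋆ pd k i := by
  ext x
  rw [pd, (hc.hasFDerivAt_convolution_right _ hh hk x).fderiv]
  exact convolution_precompR_apply _ hh (hc.fderiv ℝ) (hk.continuous_fderiv one_ne_zero) x _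

lemma IsTest.contDiff_convolution {Ω : Set E3} (hk : IsTest Ω k) (hh : LocallyIntegrable h)
    (n : ℕ) : ContDiff ℝ n (h ⋆ k) :=
  hk.2.1.contDiff_convolution_right (n := n) _ hh (hk.contDiff n)

lemma IsTest.memLp_convolution {Ω : Set E3} (hk : IsTest Ω k) (hp : 1 ≤ p) (hp' : p ≠ ∞)
    (hh : MemLp h p) : MemLp (h ⋆ k) p := by
  have k1 : MemLp k 1 := hk.memLp 1
  refine ⟨(hk.contDiff_convolution (hh.locallyIntegrable hp) 1).continuous.aestronglyMeasurable,
    (eLpNorm_convolution_le hp hp' hh.1 (memLp_one_iff_integrable.1 k1)).trans_lt ?_⟩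
  exact ENNReal.mul_lt_top k1.2 hh.2

lemma IsTest.memLp_pd_convolution {Ω : Set E3} (hk : IsTest Ω k) (hp : 1 ≤ p) (hp' : p ≠ ∞)
    (hh : MemLp h p) (i : Fin 3) : MemLp (_root_.pd (h ⋆ k) i) p := by
  rw [pd_convolution (hh.locallyIntegrable hp) hk.contDiff_one hk.2.1]
  exact (hk.pd i).memLp_convolution hp hp' hh

lemma integral_pd_eq_zero {Ω : Set E3} (hk : IsTest Ω k) (i : Fin 3) : ∫ y, pd k i y = 0 := by
  simpa [pd] using integral_mul_pd_eq_neg_of_hasCompactSupport hk.contDiff_one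
    (contDiff_const (c := (1 : ℝ))) hk.2.1 i

/-- The dilation of `f` to scale `ε` that preserves the `L¹` norm on `ℝ³`. -/
def rescale (ε : ℝ) (f : E3 → ℝ) (y : E3) : ℝ := (ε ^ 3)⁻¹ * f (ε⁻¹ • y)

variable {ε : ℝ}

lemma integral_rescale (hε : 0 < ε) (f : E3 → ℝ) : ∫ y, rescale ε f y = ∫ y, f y := by
  simp only [rescale]
  rw [integral_const_mul, Measure.integral_comp_smul]
  simp [abs_of_pos hε, hε.ne']

lemma eLpNorm_one_rescale (hε : 0 < ε) {f : E3 → ℝ} (hf : Integrable f) :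
    eLpNorm (rescale ε f) 1 volume = eLpNorm f 1 volume := by
  have norm_rescale (y : E3) : ‖rescale ε f y‖ = rescale ε (fun y => ‖f y‖) y := by
    simp [rescale, abs_of_pos hε]
  have hi : Integrable (rescale ε f) := (hf.comp_smul (inv_ne_zero hε.ne')).const_mul _
  rw [eLpNorm_one_eq_lintegral_enorm, eLpNorm_one_eq_lintegral_enorm,
    ← ofReal_integral_norm_eq_lintegral_enorm hi, ← ofReal_integral_norm_eq_lintegral_enorm hf]
  simp only [norm_rescale, integral_rescale hε]

lemma pd_rescale {f : E3 → ℝ} (hf : ContDiff ℝ 1 f) (ε : ℝ) (i : Fin 3) (y : E3) :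
    pd (rescale ε f) i y = ε⁻¹ * rescale ε (pd f i) y := by
  have h : HasFDerivAt (rescale ε f) _ y :=
    ((hf.differentiable one_ne_zero _).hasFDerivAt.comp y
      ((hasFDerivAt_id y).const_smul ε⁻¹)).const_mul _
  simp only [pd, rescale, h.fderiv]
  simp
  ring

lemma tsupport_rescale_subset (hε : 0 < ε) {f : E3 → ℝ} (hf : tsupport f ⊆ closedBall 0 1) :
    tsupport (rescale ε f) ⊆ closedBall 0 ε := by
  refine closure_minimal (fun y hy => ?_) isClosed_closedBall
  have : ε⁻¹ • y ∈ closedBall 0 1 := hf (subset_tsupport f (right_ne_zero_of_mul hy))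
  simpa [norm_smul, abs_of_pos hε, inv_mul_le_iff₀ hε] using this

/-- A mollification kernel at scale `ε`, with the constant `M` in its `L¹` bounds made explicit so
that it can be chosen independently of `ε`. -/
structure IsMollifier (ε : ℝ) (M : ℝ≥0∞) (k : E3 → ℝ) : Prop where
  isTest : IsTest (closedBall 0 ε) k
  integral_eq_one : ∫ y, k y = 1
  eLpNorm_le : eLpNorm k 1 volume ≤ M
  eLpNorm_pd_le : ∀ i, eLpNorm (pd k i) 1 volume ≤ ENNReal.ofReal ε⁻¹ * M

lemma exists_isMollifier : ∃ M : ℝ≥0∞, M ≠ ∞ ∧ ∀ ε : ℝ, 0 < ε → ∃ k, IsMollifier ε M k := by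
  let b : ContDiffBump (0 : E3) := ⟨1 / 2, 1, by norm_num, by norm_num⟩
  let ψ : E3 → ℝ := b.normed volume
  have hψ : IsTest (closedBall 0 1) ψ :=
    ⟨b.contDiff_normed, b.hasCompactSupport_normed, b.tsupport_normed_eq.subset⟩
  refine ⟨eLpNorm ψ 1 volume + ∑ i, eLpNorm (pd ψ i) 1 volume, ?_, fun ε hε => ?_⟩
  · exact ENNReal.add_ne_top.2 ⟨(hψ.memLp 1).2.ne,
      ENNReal.sum_ne_top.2 fun i _ => ((hψ.pd i).memLp 1).2.ne⟩
  have supp := tsupport_rescale_subset hε hψ.2.2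
  refine ⟨rescale ε ψ, ⟨contDiff_const.mul (hψ.1.comp (contDiff_const_smul _)),
    (isCompact_closedBall 0 ε).of_isClosed_subset (isClosed_tsupport _) supp, supp⟩, ?_, ?_, ?_⟩
  · rw [integral_rescale hε, b.integral_normed]
  · rw [eLpNorm_one_rescale hε (memLp_one_iff_integrable.1 (hψ.memLp 1))]
    exact le_self_add
  · intro i
    have eq : pd (rescale ε ψ) i = ε⁻¹ • rescale ε (pd ψ i) :=
      funext fun y => pd_rescale hψ.contDiff_one ε i y
    rw [eq, eLpNorm_const_smul,
      eLpNorm_one_rescale hε (memLp_one_iff_integrable.1 ((hψ.pd i).memLp 1)),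
      Real.enorm_of_nonneg (inv_nonneg.2 hε.le)]
    gcongr
    exact (Finset.single_le_sum (f := fun i => eLpNorm (pd ψ i) 1 volume)
      (fun _ _ => zero_le) (Finset.mem_univ i)).trans le_add_self

lemma IsTest.norm_le_of_ne_zero (hk : IsTest (closedBall 0 ε) k) {z : E3} (hz : k z ≠ 0) :
    ‖z‖ ≤ ε := by
  simpa using hk.2.2 (subset_tsupport k hz)

namespace IsMollifier

variable {M δ : ℝ≥0∞}

lemma eLpNorm_convolution_le (hk : IsMollifier ε M k) (hp : 1 ≤ p) (hp' : p ≠ ∞)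
    (hh : AEStronglyMeasurable h) : eLpNorm (h ⋆ k) p volume ≤ M * eLpNorm h p volume :=
  (_root_.eLpNorm_convolution_le hp hp' hh
    (memLp_one_iff_integrable.1 (hk.isTest.memLp 1))).trans (mul_le_mul_left hk.eLpNorm_le _)

lemma eLpNorm_convolution_sub_le (hk : IsMollifier ε M k) (hp : 1 ≤ p) (hp' : p ≠ ∞)
    (hh : MemLp h p) (hδ : ∀ z, ‖z‖ ≤ ε → eLpNorm (fun x => h (x - z) - h x) p volume ≤ δ) :
    eLpNorm (fun x => (h ⋆ k) x - h x) p volume ≤ M * δ := by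
  have bound := eLpNorm_convolution_sub_mul_integral_le hp hp' hh hk.isTest.1.continuous
    hk.isTest.2.1 fun z hz => hδ z (hk.isTest.norm_le_of_ne_zero hz)
  simp only [hk.integral_eq_one, mul_one] at bound
  exact bound.trans (mul_le_mul_left hk.eLpNorm_le _)

-- As `∂ᵢk` has mean zero, the factor `ε⁻¹` only multiplies the modulus of continuity of `h`.
lemma eLpNorm_pd_convolution_le (hk : IsMollifier ε M k) (hp : 1 ≤ p) (hp' : p ≠ ∞)
    (hh : MemLp h p) (hδ : ∀ z, ‖z‖ ≤ ε → eLpNorm (fun x => h (x - z) - h x) p volume ≤ δ)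
    (i : Fin 3) : eLpNorm (pd (h ⋆ k) i) p volume ≤ ENNReal.ofReal ε⁻¹ * M * δ := by
  have hpd := hk.isTest.pd i
  have bound := eLpNorm_convolution_sub_mul_integral_le hp hp' hh hpd.1.continuous
    hpd.2.1 fun z hz => hδ z (hpd.norm_le_of_ne_zero hz)
  simp only [integral_pd_eq_zero hk.isTest, mul_zero, sub_zero] at bound
  rw [pd_convolution (hh.locallyIntegrable hp) hk.isTest.contDiff_one hk.isTest.2.1]
  exact bound.trans (mul_le_mul_left (hk.eLpNorm_pd_le i) _)

end IsMollifier

end Mollifier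

/-! ### The Laplacian and harmonic functions vanishing at infinity -/

lemma second_deriv_nonpos_of_isLocalMax {g g' : ℝ → ℝ} {a c : ℝ}
    (hg : ∀ t, HasDerivAt g (g' t) t) (hg' : HasDerivAt g' c a) (hmax : IsLocalMax g a) :
    c ≤ 0 := by
  have deriv_g : deriv g = g' := funext fun t => (hg t).deriv
  by_contra! hc
  have hmin : IsLocalMin g a := isLocalMin_of_deriv_deriv_pos (by rwa [deriv_g, hg'.deriv])
    hmax.deriv_eq_zero (hg a).continuousAt
  have g_const : g =ᶠ[𝓝 a] fun _ => g a := by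
    filter_upwards [hmax, hmin] with t using le_antisymm
  have g'_zero : g' =ᶠ[𝓝 a] fun _ => 0 := by
    simpa [deriv_g] using g_const.deriv
  simpa [hg'.deriv, hc.ne'] using g'_zero.deriv_eq

lemma hasDerivAt_comp_add_smul_single {f : E3 → ℝ} (hf : ContDiff ℝ 1 f) (y : E3) (i : Fin 3)
    (t : ℝ) : HasDerivAt (fun s : ℝ => f (y + s • EuclideanSpace.single i (1 : ℝ)))
      (pd f i (y + t • EuclideanSpace.single i (1 : ℝ))) t := by
  have line : HasDerivAt (fun s : ℝ => y + s • EuclideanSpace.single i (1 : ℝ))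
      (EuclideanSpace.single i (1 : ℝ)) t := by
    simpa using ((hasDerivAt_id t).smul_const (EuclideanSpace.single i (1 : ℝ))).const_add y
  exact (hf.differentiable one_ne_zero _).hasFDerivAt.comp_hasDerivAt t line

lemma pd_pd_nonpos_of_isLocalMax {f : E3 → ℝ} (hf : ContDiff ℝ 2 f) {y : E3}
    (hmax : IsLocalMax f y) (i : Fin 3) : pd (pd f i) i y ≤ 0 := by
  have hf' : ContDiff ℝ 1 (pd f i) := contDiff_pd hf (by norm_num) i
  have snd := hasDerivAt_comp_add_smul_single hf' y i 0
  simp only [zero_smul, add_zero] at snd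
  refine second_deriv_nonpos_of_isLocalMax
    (hasDerivAt_comp_add_smul_single (hf.of_le one_le_two) y i) snd ?_
  have line : ContinuousAt (fun t : ℝ => y + t • EuclideanSpace.single i (1 : ℝ)) 0 := by fun_prop
  have hmax' : IsLocalMax f (y + (0 : ℝ) • EuclideanSpace.single i (1 : ℝ)) := by simpa using hmax
  exact IsMaxFilter.comp_tendsto (g := fun t : ℝ => y + t • EuclideanSpace.single i (1 : ℝ)) hmax'
    line

/-- The Laplacian on `ℝ³`, as the sum of the iterated partial derivatives `pd`. -/
def lap (w : E3 → ℝ) (x : E3) : ℝ := ∑ i, pd (pd w i) i x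

section Laplacian

variable {f g w k h : E3 → ℝ} {Ω : Set E3}

lemma pd_add (hf : ContDiff ℝ 1 f) (hg : ContDiff ℝ 1 g) (i : Fin 3) :
    pd (f + g) i = pd f i + pd g i := by
  ext x
  simp [pd, fderiv_add (hf.differentiable one_ne_zero x) (hg.differentiable one_ne_zero x)]

lemma pd_const_smul (c : ℝ) (f : E3 → ℝ) (i : Fin 3) : pd (c • f) i = c • pd f i := by
  ext x
  simp [pd, fderiv_const_smul_field]

lemma lap_add (hf : ContDiff ℝ 2 f) (hg : ContDiff ℝ 2 g) : lap (f + g) = lap f + lap g := by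
  ext x
  have hpd {f : E3 → ℝ} (hf : ContDiff ℝ 2 f) (i : Fin 3) : ContDiff ℝ 1 (pd f i) :=
    contDiff_pd hf (by norm_num) i
  simp only [lap, Pi.add_apply, ← Finset.sum_add_distrib]
  exact Finset.sum_congr rfl fun i _ => by
    rw [pd_add (hf.of_le one_le_two) (hg.of_le one_le_two), pd_add (hpd hf i) (hpd hg i)]; rfl

lemma lap_const_smul (c : ℝ) (f : E3 → ℝ) : lap (c • f) = c • lap f := by
  ext x
  simp [lap, pd_const_smul, Finset.mul_sum]

lemma lap_neg (f : E3 → ℝ) : lap (-f) = -lap f := by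
  simpa using lap_const_smul (-1) f

lemma lap_sub (hf : ContDiff ℝ 2 f) (hg : ContDiff ℝ 2 g) : lap (f - g) = lap f - lap g := by
  rw [sub_eq_add_neg, lap_add hf (g := -g) hg.neg, lap_neg, sub_eq_add_neg]

lemma lap_norm_sq (x : E3) : lap (fun y => ‖y‖ ^ 2) x = 6 := by
  have pd_norm_sq (i : Fin 3) : pd (fun y => ‖y‖ ^ 2) i = fun y => 2 * y i := by
    ext y
    rw [pd, (hasStrictFDerivAt_norm_sq y).hasFDerivAt.fderiv]
    simp [EuclideanSpace.inner_single_right]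
  have pd_coord (i : Fin 3) : pd (fun y : E3 => 2 * y i) i x = 2 := by
    have h : HasFDerivAt (fun y : E3 => 2 * y i) _ x :=
      (EuclideanSpace.proj i : E3 →L[ℝ] ℝ).hasFDerivAt.const_mul 2
    simp [pd, h.fderiv]
  simp only [lap, pd_norm_sq, pd_coord]
  norm_num

lemma lap_comp_sub_left (hk : ContDiff ℝ 2 k) (x t : E3) :
    lap (fun y => k (x - y)) t = lap k (x - t) := by
  refine Finset.sum_congr rfl fun i _ => ?_
  have first : pd (fun y => k (x - y)) i = (-1 : ℝ) • fun y => pd k i (x - y) := by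
    ext y
    simp [pd_comp_sub_left (hk.of_le one_le_two)]
  rw [first, pd_const_smul]
  simp [pd_comp_sub_left (contDiff_pd (k := 1) hk (by norm_num) i)]

lemma lap_convolution (hh : LocallyIntegrable h) (hk : IsTest Ω k) (x : E3) :
    lap (h ⋆ k) x = ∫ t, h t * lap k (x - t) := by
  simp only [lap, Finset.mul_sum, pd_convolution hh hk.contDiff_one hk.2.1,
    fun i => pd_convolution hh (hk.pd i).contDiff_one (hk.pd i).2.1 i]
  exact (integral_finsetSum _ fun i _ => ((hk.pd i).pd i).2.1.convolutionExists_right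
    (ContinuousLinearMap.lsmul ℝ ℝ) hh ((hk.pd i).pd i).1.continuous x).symm

lemma IsTest.memLp_lap (hw : IsTest Ω w) (p : ℝ≥0∞) : MemLp (lap w) p :=
  memLp_finsetSum _ fun i _ => ((hw.pd i).pd i).memLp p

end Laplacian

lemma nonpos_of_lap_eq_zero {f : E3 → ℝ} (hf : ContDiff ℝ 2 f) (hlap : ∀ x, lap f x = 0)
    (hlim : Tendsto f (cocompact E3) (𝓝 0)) (x₀ : E3) : f x₀ ≤ 0 := by
  by_contra! hm
  obtain ⟨R, hx₀, hR⟩ : ∃ R > ‖x₀‖, ∀ x, ‖x‖ = R → f x < f x₀ / 2 := by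
    have small : ∀ᶠ x in cocompact E3, f x < f x₀ / 2 := hlim.eventually_lt_const (half_pos hm)
    rw [← cobounded_eq_cocompact, ← comap_norm_atTop, eventually_comap, eventually_atTop] at small
    obtain ⟨R, hR⟩ := small
    exact ⟨max R (‖x₀‖ + 1), by simp, hR _ (le_max_left _ _)⟩
  have R_pos : 0 < R := (norm_nonneg _).trans_lt hx₀
  -- A small multiple of `‖x‖²` makes `f` strictly subharmonic while keeping the maximum on the
  -- ball away from the boundary.
  set δ := f x₀ / (2 * R ^ 2)
  have hδ : δ * R ^ 2 = f x₀ / 2 := by simp only [δ]; field_simp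
  have : 0 < δ := by positivity
  have quadratic : ContDiff ℝ 2 (δ • fun x : E3 => ‖x‖ ^ 2) := (contDiff_norm_sq ℝ).const_smul δ
  set F : E3 → ℝ := f + δ • fun x => ‖x‖ ^ 2
  have hF : ContDiff ℝ 2 F := hf.add quadratic
  obtain ⟨y, hy, ymax⟩ := (isCompact_closedBall (0 : E3) R).exists_isMaxOn
    ⟨0, by simp [R_pos.le]⟩ hF.continuous.continuousOn
  have y_lt : ‖y‖ < R := by
    refine (mem_closedBall_zero_iff.1 hy).lt_of_ne fun hyR => ?_
    have below : F y < f x₀ := by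
      simp only [F, Pi.add_apply, Pi.smul_apply, smul_eq_mul, hyR, hδ]
      linarith [hR y hyR]
    have above : f x₀ ≤ F x₀ := le_add_of_nonneg_right (by simp only [Pi.smul_apply]; positivity)
    exact (above.trans (ymax (by simpa using hx₀.le))).not_gt below
  have lap_pos : 0 < lap F y := by
    rw [lap_add hf quadratic, lap_const_smul, Pi.add_apply, Pi.smul_apply, hlap, lap_norm_sq]
    positivity
  have hmax : IsLocalMax F y := ymax.isLocalMax (closedBall_mem_nhds_of_mem (by simpa using y_lt))
  exact lap_pos.not_ge (Finset.sum_nonpos fun i _ => pd_pd_nonpos_of_isLocalMax hF hmax i)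

lemma eq_zero_of_lap_eq_zero {f : E3 → ℝ} (hf : ContDiff ℝ 2 f) (hlap : ∀ x, lap f x = 0)
    (hlim : Tendsto f (cocompact E3) (𝓝 0)) (x : E3) : f x = 0 := by
  refine le_antisymm (nonpos_of_lap_eq_zero hf hlap hlim x) ?_
  simpa using nonpos_of_lap_eq_zero hf.neg (fun x => by simp [← Pi.neg_def, lap_neg, hlap])
    (by simpa using hlim.neg) x

lemma ae_eq_of_integral_mul_lap_eq {p q : ℝ≥0∞} (hp : 1 ≤ p) (hp' : p ≠ ∞) (hq : 1 ≤ q)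
    (hq' : q ≠ ∞) {f g : E3 → ℝ} (hf : MemLp f p) (hg : MemLp g q)
    (h : ∀ w, IsTest univ w → ∫ x, f x * lap w x = ∫ x, g x * lap w x) : f =ᵐ[volume] g := by
  have lf := hf.locallyIntegrable hp
  have lg := hg.locallyIntegrable hq
  refine ae_eq_of_integral_contDiff_smul_eq lf lg fun ψ hψ hψc => ?_
  -- `ψ` tested against `f - g` is the value at `0` of a harmonic mollification of `f - g`.
  set k : E3 → ℝ := fun z => ψ (0 - z)
  have hk : IsTest univ k := IsTest.comp_sub_left ⟨hψ, hψc, subset_univ _⟩ 0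
  have fk : ContDiff ℝ 2 (f ⋆ k) := hk.contDiff_convolution lf 2
  have gk : ContDiff ℝ 2 (g ⋆ k) := hk.contDiff_convolution lg 2
  have lap_zero (x : E3) : lap (f ⋆ k - g ⋆ k) x = 0 := by
    rw [lap_sub fk gk, Pi.sub_apply, lap_convolution lf hk, lap_convolution lg hk, sub_eq_zero]
    simpa only [lap_comp_sub_left hk.contDiff_two x] using h _ (hk.comp_sub_left x)
  have lim : Tendsto (f ⋆ k - g ⋆ k) (cocompact E3) (𝓝 0) := by
    simpa [Pi.sub_def] using
      (tendsto_convolution_cocompact hp hp' hf hk.1.continuous hk.2.1).sub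
        (tendsto_convolution_cocompact hq hq' hg hk.1.continuous hk.2.1)
  simpa [convolution, k, sub_eq_zero, mul_comm (ψ _)] using
    eq_zero_of_lap_eq_zero (fk.sub gk) lap_zero lim 0

/-! ### Pressure estimates by duality with the Laplacian -/

lemma exists_eq_inner_of_abs_le_mul_norm {W H : Type*} [AddCommGroup W] [Module ℝ W]
    [NormedAddCommGroup H] [InnerProductSpace ℝ H] [CompleteSpace H] (T : W →ₗ[ℝ] H)
    (l : W →ₗ[ℝ] ℝ) {C : ℝ} (h : ∀ w, |l w| ≤ C * ‖T w‖) : ∃ g : H, ∀ w, l w = inner ℝ g (T w) := by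
  obtain ⟨s, hs⟩ := T.rangeRestrict.exists_rightInverse_of_surjective T.range_rangeRestrict
  have T_s (v : LinearMap.range T) : T (s v) = v := congrArg Subtype.val (LinearMap.congr_fun hs v)
  have bound (v : LinearMap.range T) : ‖(l ∘ₗ s) v‖ ≤ C * ‖v‖ := by
    simpa [T_s] using h (s v)
  obtain ⟨g, hg, -⟩ := exists_extension_norm_eq (LinearMap.range T) ((l ∘ₗ s).mkContinuous C bound)
  refine ⟨(InnerProductSpace.toDual ℝ H).symm g, fun w => ?_⟩
  have l_s : l (s (T.rangeRestrict w)) = l w := by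
    rw [← sub_eq_zero, ← map_sub, ← abs_nonpos_iff]
    simpa [T_s] using h (s (T.rangeRestrict w) - w)
  rw [InnerProductSpace.toDual_symm_apply, ← l_s]
  exact (hg (T.rangeRestrict w)).symm

lemma exists_memLp_two_eq_integral_mul {α W : Type*} [MeasurableSpace α] {m : Measure α}
    [AddCommGroup W] [Module ℝ W] (T : W →ₗ[ℝ] α → ℝ) (hT : ∀ w, MemLp (T w) 2 m)
    (l : W →ₗ[ℝ] ℝ) {C : ℝ} (h : ∀ w, |l w| ≤ C * (eLpNorm (T w) 2 m).toReal) :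
    ∃ g, MemLp g 2 m ∧ ∀ w, l w = ∫ x, g x * T w x ∂m := by
  let T₂ : W →ₗ[ℝ] Lp ℝ 2 m :=
    { toFun w := (hT w).toLp
      map_add' v w := by simp only [map_add]; exact MemLp.toLp_add _ _
      map_smul' c w := by simp only [map_smul]; exact MemLp.toLp_const_smul c _ }
  obtain ⟨g, hg⟩ := exists_eq_inner_of_abs_le_mul_norm T₂ l (C := C) fun w => by
    simpa [T₂, Lp.norm_toLp] using h w
  refine ⟨g, Lp.memLp g, fun w => ?_⟩
  rw [hg, L2.inner_def]
  refine integral_congr_ae ?_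
  filter_upwards [(hT w).coeFn_toLp] with x hx
  simp [T₂, hx, mul_comm]

/-- The space of test functions on `ℝ³` as a submodule, the domain of the linear functionals to
which Riesz representation is applied. -/
def testSpace : Submodule ℝ (E3 → ℝ) where
  carrier := {w | IsTest univ w}
  add_mem' a b := ⟨a.1.add b.1, a.2.1.add b.2.1, subset_univ _⟩
  zero_mem' := ⟨contDiff_const, HasCompactSupport.zero, subset_univ _⟩
  smul_mem' c _ a := ⟨contDiff_const.smul a.1, a.2.1.smul_left (f := fun _ => c), subset_univ _⟩

lemma memLp_two_of_abs_integral_mul_lap_le {p : E3 → ℝ} (hp : MemLp p 1) {C : ℝ}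
    (h : ∀ w, IsTest univ w → |∫ x, p x * lap w x| ≤ C * (eLpNorm (lap w) 2 volume).toReal) :
    MemLp p 2 := by
  let T : testSpace →ₗ[ℝ] E3 → ℝ :=
    { toFun w := lap w
      map_add' v w := lap_add (IsTest.contDiff_two v.2) (IsTest.contDiff_two w.2)
      map_smul' c w := lap_const_smul c w }
  have hint (w : testSpace) : Integrable fun x => p x * T w x :=
    hp.integrable_mul (IsTest.memLp_lap w.2 ∞)
  let l : testSpace →ₗ[ℝ] ℝ :=
    { toFun w := ∫ x, p x * T w x
      map_add' v w := by
        simp only [← integral_add (hint v) (hint w), map_add, Pi.add_apply, mul_add]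
      map_smul' c w := by
        simp only [map_smul, Pi.smul_apply, smul_eq_mul, RingHom.id_apply, ← integral_const_mul,
          mul_left_comm] }
  obtain ⟨g, hg, hgl⟩ := exists_memLp_two_eq_integral_mul T (fun w => IsTest.memLp_lap w.2 2) l
    fun w => h w w.2
  exact hg.ae_eq (ae_eq_of_integral_mul_lap_eq le_rfl ENNReal.one_ne_top one_le_two
    ENNReal.ofNat_ne_top hp hg fun w hw => hgl ⟨w, hw⟩).symm

lemma eLpNorm_pd_pd_le_eLpNorm_lap {w : E3 → ℝ} (hw : IsTest univ w) (i j : Fin 3) :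
    (eLpNorm (pd (pd w i) j) 2 volume).toReal ≤ (eLpNorm (lap w) 2 volume).toReal := by
  refine (sq_le_sq₀ ENNReal.toReal_nonneg ENNReal.toReal_nonneg).1 ?_
  rw [toReal_eLpNorm_two_sq (((hw.pd i).pd j).memLp 2), toReal_eLpNorm_two_sq (hw.memLp_lap 2)]
  have hint (a b : Fin 3) : Integrable fun x => pd (pd w a) a x * pd (pd w b) b x :=
    (((hw.pd a).pd a).memLp 2).integrable_mul (((hw.pd b).pd b).memLp 2)
  have swap (a b : Fin 3) :
      ∫ x, pd (pd w a) a x * pd (pd w b) b x = ∫ x, pd (pd w a) b x ^ 2 := by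
    rw [← integral_pd_mul_pd_swap (hw.pd a).contDiff_one (hw.pd b).contDiff_two (hw.pd a).2.1 a b]
    simp only [pd_comm hw.contDiff_two b a, sq]
  have lap_sq : ∫ x, lap w x ^ 2 = ∑ a, ∑ b, ∫ x, pd (pd w a) b x ^ 2 := by
    simp only [lap, sq, Finset.sum_mul_sum]
    rw [integral_finsetSum _ fun a _ => integrable_finsetSum _ fun b _ => hint a b]
    simp only [integral_finsetSum _ fun b _ => hint _ b, swap, sq]
  have nonneg (a b : Fin 3) : 0 ≤ ∫ x, pd (pd w a) b x ^ 2 := integral_nonneg fun x => sq_nonneg _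
  rw [lap_sq]
  calc ∫ x, pd (pd w i) j x ^ 2
      ≤ ∑ b, ∫ x, pd (pd w i) b x ^ 2 := Finset.single_le_sum
        (f := fun b => ∫ x, pd (pd w i) b x ^ 2) (fun b _ => nonneg i b) (Finset.mem_univ j)
    _ ≤ ∑ a, ∑ b, ∫ x, pd (pd w a) b x ^ 2 := Finset.single_le_sum
        (f := fun a => ∑ b, ∫ x, pd (pd w a) b x ^ 2)
        (fun a _ => Finset.sum_nonneg fun b _ => nonneg a b) (Finset.mem_univ i)

lemma exists_eLpNorm_pd_six_le_eLpNorm_lap : ∃ C : ℝ≥0, ∀ w, IsTest univ w → ∀ i,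
    (eLpNorm (pd w i) 6 volume).toReal ≤ C * (eLpNorm (lap w) 2 volume).toReal := by
  obtain ⟨C, hC⟩ := exists_eLpNorm_six_le_sum_eLpNorm_pd
  refine ⟨C * 3, fun w hw i => ?_⟩
  have fin (j : Fin 3) : eLpNorm (pd (pd w i) j) 2 volume ≠ ∞ := (((hw.pd i).pd j).memLp 2).2.ne
  calc (eLpNorm (pd w i) 6 volume).toReal
      ≤ (C * ∑ j, eLpNorm (pd (pd w i) j) 2 volume).toReal :=
        ENNReal.toReal_mono (ENNReal.mul_ne_top ENNReal.coe_ne_top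
          (ENNReal.sum_ne_top.2 fun j _ => fin j)) (hC _ (hw.pd i).contDiff_one (hw.pd i).2.1)
    _ = C * ∑ j, (eLpNorm (pd (pd w i) j) 2 volume).toReal := by
        rw [ENNReal.toReal_mul, ENNReal.toReal_sum fun j _ => fin j, ENNReal.coe_toReal]
    _ ≤ C * ∑ _j : Fin 3, (eLpNorm (lap w) 2 volume).toReal := by
        exact mul_le_mul_of_nonneg_left
          (Finset.sum_le_sum fun j _ => eLpNorm_pd_pd_le_eLpNorm_lap hw i j) C.coe_nonneg
    _ = (C * 3 : ℝ≥0) * (eLpNorm (lap w) 2 volume).toReal := by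
        simp [mul_assoc]

lemma memLp_two_of_integral_mul_lap_eq {p : E3 → ℝ} (hp : MemLp p 1)
    {A : Fin 3 → Fin 3 → E3 → ℝ} {f : Fin 3 → E3 → ℝ} (hA : ∀ i j, MemLp (A i j) 2)
    (hf : ∀ i, MemLp (f i) (6 / 5))
    (h : ∀ w, IsTest univ w → ∫ x, p x * lap w x =
      (∑ i, ∑ j, ∫ x, A i j x * pd (pd w i) j x) - ∑ i, ∫ x, f i x * pd w i x) :
    MemLp p 2 := by
  obtain ⟨C, hC⟩ := exists_eLpNorm_pd_six_le_eLpNorm_lap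
  refine memLp_two_of_abs_integral_mul_lap_le hp
    (C := (∑ i, ∑ j, (eLpNorm (A i j) 2 volume).toReal) +
      ∑ i, (eLpNorm (f i) (6 / 5) volume).toReal * C) fun w hw => ?_
  rw [h w hw, add_mul]
  refine (abs_sub _ _).trans (add_le_add ?_ ?_)
  · simp only [Finset.sum_mul]
    refine (Finset.abs_sum_le_sum_abs _ _).trans (Finset.sum_le_sum fun i _ => ?_)
    refine (Finset.abs_sum_le_sum_abs _ _).trans (Finset.sum_le_sum fun j _ => ?_)
    refine (abs_integral_mul_le_mul_eLpNorm (hA i j) (((hw.pd i).pd j).memLp 2)).trans ?_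
    exact mul_le_mul_of_nonneg_left (eLpNorm_pd_pd_le_eLpNorm_lap hw i j) ENNReal.toReal_nonneg
  · simp only [Finset.sum_mul]
    refine (Finset.abs_sum_le_sum_abs _ _).trans (Finset.sum_le_sum fun i _ => ?_)
    refine (abs_integral_mul_le_mul_eLpNorm (hf i) ((hw.pd i).memLp 6)).trans ?_
    rw [mul_assoc]
    exact mul_le_mul_of_nonneg_left (hC w hw i) ENNReal.toReal_nonneg

/-! ### Functions of class `D₀^{1,2}` -/

lemma enorm_sub_le_lintegral_fderiv {v : E3 → ℝ} (hv : ContDiff ℝ 1 v) (x z : E3) :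
    ‖v (x - z) - v x‖ₑ ≤ ∫⁻ t in Icc (0 : ℝ) 1, ‖fderiv ℝ v (x - t • z) z‖ₑ := by
  have hd (t : ℝ) :
      HasDerivAt (fun t : ℝ => v (x - t • z)) (fderiv ℝ v (x - t • z) (-z)) t := by
    have line : HasDerivAt (fun t : ℝ => x - t • z) (-z) t := by
      simpa using ((hasDerivAt_id t).smul_const z).const_sub x
    exact (hv.differentiable one_ne_zero _).hasFDerivAt.comp_hasDerivAt t line
  have hc : Continuous fun t : ℝ => fderiv ℝ v (x - t • z) (-z) := by
    have := hv.continuous_fderiv one_ne_zero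
    fun_prop
  have ftc := intervalIntegral.integral_eq_sub_of_hasDerivAt (a := 0) (b := 1)
    (fun t _ => hd t) (hc.intervalIntegrable _ _)
  rw [one_smul, zero_smul, sub_zero, intervalIntegral.integral_of_le zero_le_one,
    ← integral_Icc_eq_integral_Ioc] at ftc
  rw [← ftc]
  simpa using enorm_integral_le_lintegral_enorm (μ := volume.restrict (Icc (0 : ℝ) 1))
    fun t : ℝ => fderiv ℝ v (x - t • z) (-z)

lemma eLpNorm_comp_sub_right_sub_le {v : E3 → ℝ} (hv : ContDiff ℝ 1 v) {p : ℝ≥0∞} (hp : 1 ≤ p)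
    (hp' : p ≠ ∞) (z : E3) :
    eLpNorm (fun x => v (x - z) - v x) p volume ≤ ‖z‖ₑ * ∑ i, eLpNorm (pd v i) p volume := by
  have hv' := hv.continuous_fderiv one_ne_zero
  have hF : Continuous (Function.uncurry fun (x : E3) (t : ℝ) => ‖fderiv ℝ v (x - t • z) z‖ₑ) := by
    unfold Function.uncurry
    fun_prop
  have slice (t : ℝ) : eLpNorm (fun x => ‖fderiv ℝ v (x - t • z) z‖ₑ) p volume
      ≤ ‖z‖ₑ * ∑ i, eLpNorm (pd v i) p volume :=
    calc eLpNorm (fun x => ‖fderiv ℝ v (x - t • z) z‖ₑ) p volume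
        ≤ ENNReal.ofReal ‖z‖ * eLpNorm (fun x => ‖fderiv ℝ v (x - t • z)‖) p volume := by
          rw [eLpNorm_enorm]
          refine eLpNorm_le_mul_eLpNorm_of_ae_le_mul (ae_of_all _ fun x => ?_) p
          rw [norm_norm, mul_comm]
          exact (fderiv ℝ v (x - t • z)).le_opNorm z
      _ = ‖z‖ₑ * eLpNorm (fderiv ℝ v) p volume := by
          rw [ofReal_norm, eLpNorm_comp_sub_right hv'.norm.aestronglyMeasurable, eLpNorm_norm]
      _ ≤ _ := by gcongr; exact eLpNorm_fderiv_le_sum_eLpNorm_pd hv hp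
  calc eLpNorm (fun x => v (x - z) - v x) p volume
      ≤ eLpNorm (fun x => ∫⁻ t in Icc (0 : ℝ) 1, ‖fderiv ℝ v (x - t • z) z‖ₑ) p volume :=
        eLpNorm_mono_enorm fun x => by
          simpa only [enorm_eq_self] using enorm_sub_le_lintegral_fderiv hv x z
    _ ≤ _ := by
        simpa using eLpNorm_lintegral_le (ν := volume.restrict (Icc (0 : ℝ) 1)) hp hp'
          hF.measurable.aemeasurable (ae_of_all _ slice)

/-- `fn` is a sequence of test functions witnessing that the scalar function `f` belongs to
`D₀^{1,2}(ℝ³)` with weak gradient `df`. -/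
structure IsD012Approx (f : E3 → ℝ) (df : Fin 3 → E3 → ℝ) (fn : ℕ → E3 → ℝ) : Prop where
  isTest : ∀ n, IsTest univ (fn n)
  tendsto : TendstoInLp 6 volume fn atTop f
  tendsto_pd : ∀ j, TendstoInLp 2 volume (fun n => pd (fn n) j) atTop (df j)

namespace IsD012Approx

variable {f : E3 → ℝ} {df : Fin 3 → E3 → ℝ} {fn : ℕ → E3 → ℝ}

lemma memLp (h : IsD012Approx f df fn) : MemLp f 6 := h.tendsto.memLp_lim

lemma memLp_grad (h : IsD012Approx f df fn) (j : Fin 3) : MemLp (df j) 2 :=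
  (h.tendsto_pd j).memLp_lim

lemma tendstoInMeasure_comp_sub_right_sub (h : IsD012Approx f df fn) (z : E3) :
    TendstoInMeasure volume (fun n x => fn n (x - z) - fn n x) atTop
      (fun x => f (x - z) - f x) := by
  have mp : MeasurePreserving (fun x : E3 => x - z) volume volume :=
    measurePreserving_sub_right volume z
  have hd (n : ℕ) : AEStronglyMeasurable (fun x => fn n x - f x) :=
    (h.tendsto.memLp n).1.sub h.memLp.1
  have hm {g : E3 → ℝ} (hg : AEStronglyMeasurable g) :
      AEStronglyMeasurable fun x => g (x - z) - g x := (hg.comp_measurePreserving mp).sub hg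
  refine tendstoInMeasure_of_tendsto_eLpNorm (p := 6) (by simp)
    (fun n => hm (h.tendsto.memLp n).1) (hm h.memLp.1) ?_
  refine tendsto_of_tendsto_of_tendsto_of_le_of_le tendsto_const_nhds
    (by simpa using h.tendsto.tendsto.add h.tendsto.tendsto) (fun _ => zero_le) fun n => ?_
  calc eLpNorm ((fun x => fn n (x - z) - fn n x) - fun x => f (x - z) - f x) 6 volume
      = eLpNorm ((fun x => fn n (x - z) - f (x - z)) - fun x => fn n x - f x) 6 volume := by
        congr 1; ext x; simp only [Pi.sub_apply]; ring
    _ ≤ eLpNorm (fun x => fn n (x - z) - f (x - z)) 6 volume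
          + eLpNorm (fun x => fn n x - f x) 6 volume :=
        eLpNorm_sub_le ((hd n).comp_measurePreserving mp) (hd n) (by norm_num)
    _ = _ := by rw [eLpNorm_comp_sub_right (hd n)]

lemma eLpNorm_comp_sub_right_sub_le (h : IsD012Approx f df fn) (z : E3) :
    eLpNorm (fun x => f (x - z) - f x) 2 volume ≤ ‖z‖ₑ * ∑ j, eLpNorm (df j) 2 volume := by
  let bound (n : ℕ) : ℝ≥0∞ := ‖z‖ₑ *
    ∑ j, (eLpNorm (fun x => pd (fn n) j x - df j x) 2 volume + eLpNorm (df j) 2 volume)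
  have bound_lim : Tendsto bound atTop (𝓝 (‖z‖ₑ * ∑ j, eLpNorm (df j) 2 volume)) := by
    refine ENNReal.Tendsto.const_mul (tendsto_finsetSum _ fun j _ => ?_) (.inr (by finiteness))
    simpa using (h.tendsto_pd j).tendsto.add_const (eLpNorm (df j) 2 volume)
  have le_bound (n : ℕ) : eLpNorm (fun x => fn n (x - z) - fn n x) 2 volume ≤ bound n := by
    refine (_root_.eLpNorm_comp_sub_right_sub_le (h.isTest n).contDiff_one (by norm_num)
      (by simp) z).trans ?_
    refine mul_le_mul_right (Finset.sum_le_sum fun j _ => ?_) _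
    have hsub : AEStronglyMeasurable fun x => pd (fn n) j x - df j x :=
      ((h.tendsto_pd j).memLp n).1.sub (h.memLp_grad j).1
    simpa [Pi.add_def] using eLpNorm_add_le (p := 2) hsub (h.memLp_grad j).1 (by norm_num)
  have hm (n : ℕ) : AEStronglyMeasurable fun x => fn n (x - z) - fn n x :=
    ((h.tendsto.memLp n).1.comp_measurePreserving
      (measurePreserving_sub_right volume z)).sub (h.tendsto.memLp n).1
  refine le_of_forall_gt_imp_ge_of_dense fun C hC => ?_
  exact eLpNorm_le_of_tendstoInMeasure
    ((bound_lim.eventually_le_const hC).mono fun n hn => (le_bound n).trans hn)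
    (h.tendstoInMeasure_comp_sub_right_sub z) hm

lemma integral_mul_pd_eq_neg (h : IsD012Approx f df fn) {g : E3 → ℝ} (hg : ContDiff ℝ 1 g)
    (hg2 : MemLp g 2) (i : Fin 3) (hpd : MemLp (pd g i) (6 / 5)) :
    ∫ x, f x * pd g i x = - ∫ x, df i x * g x := by
  have left : Tendsto (fun n => ∫ x, fn n x * pd g i x) atTop (𝓝 (∫ x, f x * pd g i x)) :=
    h.tendsto.integral_mul (.const hpd)
  have right : Tendsto (fun n => ∫ x, pd (fn n) i x * g x) atTop (𝓝 (∫ x, df i x * g x)) :=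
    (h.tendsto_pd i).integral_mul (.const hg2)
  refine tendsto_nhds_unique left (right.neg.congr fun n => ?_)
  exact (integral_mul_pd_eq_neg_of_hasCompactSupport (h.isTest n).contDiff_one hg
    (h.isTest n).2.1 i).symm

end IsD012Approx

/-! ### Renormalization of the continuity equation -/

/-- The divergence of the vector field `m` vanishes in the sense of distributions. -/
def WeaklyDivFree (m : Fin 3 → E3 → ℝ) : Prop :=
  ∀ φ, IsTest univ φ → ∑ i, ∫ x, m i x * pd φ i x = 0

lemma WeaklyDivFree.sum_pd_convolution_eq_zero {m : Fin 3 → E3 → ℝ} (hm : WeaklyDivFree m)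
    (hloc : ∀ i, LocallyIntegrable (m i)) {k : E3 → ℝ} (hk : IsTest univ k) (x : E3) :
    ∑ i, pd (m i ⋆ k) i x = 0 := by
  have test := hm _ (hk.comp_sub_left x)
  simp only [pd_comp_sub_left hk.contDiff_one, mul_neg, integral_neg, Finset.sum_neg_distrib,
    neg_eq_zero] at test
  simp only [pd_convolution (hloc _) hk.contDiff_one hk.2.1]
  exact test

lemma sum_integral_mul_pd_eq_zero_of_sum_pd_eq_zero {p q : ℝ≥0∞} [ENNReal.HolderTriple p q 1]
    {m : Fin 3 → E3 → ℝ} {g : E3 → ℝ} (hm : ∀ i, ContDiff ℝ 1 (m i)) (hg : ContDiff ℝ 1 g)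
    (hmp : ∀ i, MemLp (m i) p) (hpm : ∀ i, MemLp (pd (m i) i) p) (hgq : MemLp g q)
    (hpg : ∀ i, MemLp (pd g i) q) (hdiv : ∀ x, ∑ i, pd (m i) i x = 0) :
    ∑ i, ∫ x, m i x * pd g i x = 0 := by
  have parts (i : Fin 3) : ∫ x, m i x * pd g i x = - ∫ x, pd (m i) i x * g x :=
    integral_mul_pd_eq_neg (hm i) hg i ((hpm i).integrable_mul hgq)
      ((hmp i).integrable_mul (hpg i)) ((hmp i).integrable_mul hgq)
  calc ∑ i, ∫ x, m i x * pd g i x = - ∫ x, (∑ i, pd (m i) i x) * g x := by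
        have hi (i : Fin 3) : Integrable fun x => pd (m i) i x * g x := (hpm i).integrable_mul hgq
        simp only [parts, Finset.sum_neg_distrib, Finset.sum_mul]
        rw [integral_finsetSum _ fun i _ => hi i]
    _ = 0 := by simp [hdiv]

/-- The primitive of `a` that vanishes at `0`. -/
def prim (a : ℝ → ℝ) (s : ℝ) : ℝ := ∫ t in (0 : ℝ)..s, a t

section Prim

variable {a : ℝ → ℝ}

lemma prim_zero : prim a 0 = 0 := intervalIntegral.integral_same

lemma hasDerivAt_prim (ha : Continuous a) (s : ℝ) : HasDerivAt (prim a) (a s) s :=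
  intervalIntegral.integral_hasDerivAt_right (ha.intervalIntegrable _ _)
    (ha.stronglyMeasurableAtFilter _ _) ha.continuousAt

lemma contDiff_prim (ha : Continuous a) : ContDiff ℝ 1 (prim a) := by
  have deriv_prim : deriv (prim a) = a := funext fun s => (hasDerivAt_prim ha s).deriv
  exact contDiff_one_iff_deriv.2
    ⟨fun s => (hasDerivAt_prim ha s).differentiableAt, deriv_prim.symm ▸ ha⟩

lemma abs_prim_sub_prim_le (ha : Continuous a) {B s t : ℝ}
    (hB : ∀ τ, |τ| ≤ |s| + |t| → |a τ| ≤ B) : |prim a s - prim a t| ≤ B * |s - t| := by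
  rw [prim, prim, intervalIntegral.integral_interval_sub_left (ha.intervalIntegrable _ _)
    (ha.intervalIntegrable _ _)]
  refine intervalIntegral.norm_integral_le_of_norm_le_const (f := a) fun τ hτ => hB τ ?_
  rcases mem_uIoc.1 hτ with h | h
  · exact (abs_le_max_abs_abs h.1.le h.2).trans (by grind)
  · exact (abs_le_max_abs_abs h.1.le h.2).trans (by grind)

lemma pd_prim_comp {r : E3 → ℝ} (ha : Continuous a) (hr : ContDiff ℝ 1 r) (i : Fin 3) :
    pd (fun x => prim a (r x)) i = fun x => a (r x) * pd r i x :=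
  funext fun x => pd_comp (hasDerivAt_prim ha) hr i x

lemma contDiff_prim_comp {r : E3 → ℝ} (ha : Continuous a) (hr : ContDiff ℝ 1 r) :
    ContDiff ℝ 1 fun x => prim a (r x) :=
  (contDiff_prim ha).comp hr

end Prim

lemma memLp_pow_three {r : E3 → ℝ} (hr : MemLp r 6) : MemLp (fun x => r x ^ 3) 2 := by
  have sq : MemLp (fun x => r x * r x) 3 := hr.mul hr
  have cube : MemLp (fun x => r x * (r x * r x)) 2 := sq.mul hr
  exact cube.ae_eq (ae_of_all _ fun x => by ring)

/-- Weights `a` for which the renormalized equation can be tested: together with `r ∈ L⁶`, the two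
growth bounds place `a (r)`, `r a (r)` and their primitives in the Lebesgue spaces needed. -/
structure IsRenormWeight (a : ℝ → ℝ) (C : ℝ) : Prop where
  continuous : Continuous a
  abs_le : ∀ s, |a s| ≤ C * |s|
  abs_le_cube : ∀ s, |a s| ≤ C * |s| ^ 3

namespace IsRenormWeight

variable {a : ℝ → ℝ} {C : ℝ} {r : E3 → ℝ}

lemma continuous_id_mul (ha : IsRenormWeight a C) : Continuous fun t => t * a t :=
  continuous_id.mul ha.continuous

lemma nonneg (ha : IsRenormWeight a C) : 0 ≤ C := by
  simpa using (abs_nonneg (a 1)).trans (ha.abs_le 1)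

lemma abs_prim_le (ha : IsRenormWeight a C) (s : ℝ) : |prim a s| ≤ C * |s| ^ 4 := by
  have hC := ha.nonneg
  have bound := abs_prim_sub_prim_le ha.continuous (s := s) (t := 0) (B := C * |s| ^ 3)
    fun τ hτ => (ha.abs_le_cube τ).trans (by rw [abs_zero, add_zero] at hτ; gcongr)
  rw [prim_zero, sub_zero, sub_zero] at bound
  exact bound.trans_eq (by ring)

lemma abs_prim_id_mul_sub_le (ha : IsRenormWeight a C) (s t : ℝ) :
    |prim (fun t => t * a t) s - prim (fun t => t * a t) t|
      ≤ C * |(s - t) * ((|s| + |t|) * (|s| + |t|))| := by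
  have hC := ha.nonneg
  have bound := abs_prim_sub_prim_le ha.continuous_id_mul (s := s) (t := t)
    (B := (|s| + |t|) * (C * (|s| + |t|))) fun τ hτ => by
      rw [abs_mul]
      gcongr
      exact (ha.abs_le τ).trans (by gcongr)
  refine bound.trans_eq ?_
  rw [abs_mul, abs_mul, abs_of_nonneg (by positivity : 0 ≤ |s| + |t|)]
  ring

lemma memLp_comp (ha : IsRenormWeight a C) (hr : MemLp r 6) : MemLp (fun x => a (r x)) 2 := by
  refine (memLp_pow_three hr).of_le_mul (c := C)
    (ha.continuous.comp_aestronglyMeasurable hr.1) (ae_of_all _ fun x => ?_)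
  simpa only [norm_pow, Real.norm_eq_abs] using ha.abs_le_cube (r x)

lemma memLp_mul_comp (ha : IsRenormWeight a C) (hr : MemLp r 6) :
    MemLp (fun x => r x * a (r x)) (3 / 2) :=
  (ha.memLp_comp hr).mul hr

lemma memLp_prim_comp (ha : IsRenormWeight a C) (hr : MemLp r 6) :
    MemLp (fun x => prim a (r x)) (3 / 2) := by
  have fourth : MemLp (fun x => r x * r x ^ 3) (3 / 2) := (memLp_pow_three hr).mul hr
  refine fourth.of_le_mul (c := C)
    ((contDiff_prim ha.continuous).continuous.comp_aestronglyMeasurable hr.1)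
    (ae_of_all _ fun x => (ha.abs_prim_le _).trans_eq ?_)
  simp only [norm_mul, norm_pow, Real.norm_eq_abs]
  ring

lemma memLp_prim_id_mul_comp (ha : IsRenormWeight a C) (hr : MemLp r 6) :
    MemLp (fun x => prim (fun t => t * a t) (r x)) 2 := by
  refine (memLp_pow_three hr).of_le_mul (c := C)
    ((contDiff_prim ha.continuous_id_mul).continuous.comp_aestronglyMeasurable hr.1)
    (ae_of_all _ fun x => ?_)
  have bound := ha.abs_prim_id_mul_sub_le (r x) 0
  simp only [prim_zero, sub_zero, abs_zero, add_zero] at bound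
  refine bound.trans_eq ?_
  simp only [abs_mul, abs_abs, norm_pow, Real.norm_eq_abs]
  ring

lemma tendstoInLp_prim_id_mul_comp (ha : IsRenormWeight a C) {rn : ℕ → E3 → ℝ}
    (h : TendstoInLp 6 volume rn atTop r) :
    TendstoInLp 2 volume (fun n x => prim (fun t => t * a t) (rn n x)) atTop
      (fun x => prim (fun t => t * a t) (r x)) := by
  have hr := h.memLp_lim
  have diff : TendstoInLp 6 volume (fun n x => rn n x - r x) atTop 0 :=
    .of_le (fun n => (h.memLp n).sub hr) MemLp.zero h.tendsto fun n => by simp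
  have sum : TendstoInLp 6 volume (fun n x => |rn n x| + |r x|) atTop (fun x => |r x| + |r x|) :=
    .of_le (fun n => (h.memLp n).abs.add hr.abs) (hr.abs.add hr.abs) h.tendsto fun n =>
      eLpNorm_mono fun x => by simpa using abs_abs_sub_abs_le (rn n x) (r x)
  have sq : TendstoInLp 3 volume (fun n x => (|rn n x| + |r x|) * (|rn n x| + |r x|)) atTop _ :=
    sum.mul (by norm_num) sum
  have prod : TendstoInLp 2 volume
      (fun n x => (rn n x - r x) * ((|rn n x| + |r x|) * (|rn n x| + |r x|))) atTop _ :=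
    diff.mul (by norm_num) sq
  have prod_lim := ENNReal.Tendsto.const_mul (a := ENNReal.ofReal C) prod.tendsto (.inr (by simp))
  simp only [Pi.zero_apply, zero_mul, sub_zero, mul_zero] at prod_lim
  exact .of_le (fun n => ha.memLp_prim_id_mul_comp (h.memLp n)) (ha.memLp_prim_id_mul_comp hr)
    prod_lim fun n => eLpNorm_le_mul_eLpNorm_of_ae_le_mul
      (ae_of_all _ fun x => ha.abs_prim_id_mul_sub_le (rn n x) (r x)) 2

lemma memLp_comp_mul_pd (ha : IsRenormWeight a C) (hr6 : MemLp r 6) {i : Fin 3}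
    (hpr : MemLp (pd r i) 6) : MemLp (fun x => a (r x) * pd r i x) (3 / 2) :=
  hpr.mul (ha.memLp_comp hr6)

lemma memLp_mul_comp_mul_pd (ha : IsRenormWeight a C) (hr6 : MemLp r 6) {i : Fin 3}
    (hpr : MemLp (pd r i) 6) : MemLp (fun x => r x * a (r x) * pd r i x) (6 / 5) :=
  hpr.mul (ha.memLp_mul_comp hr6)

lemma sum_integral_mul_comp_mul_pd_eq_zero (ha : IsRenormWeight a C) (hr : ContDiff ℝ 1 r)
    (hr6 : MemLp r 6) (hpr : ∀ i, MemLp (pd r i) 6) {m : Fin 3 → E3 → ℝ}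
    (hm : ∀ i, ContDiff ℝ 1 (m i)) (hm3 : ∀ i, MemLp (m i) 3) (hpm : ∀ i, MemLp (pd (m i) i) 3)
    (hdiv : ∀ x, ∑ i, pd (m i) i x = 0) :
    ∑ i, ∫ x, m i x * (a (r x) * pd r i x) = 0 := by
  have hpd := pd_prim_comp ha.continuous hr
  simpa only [hpd] using sum_integral_mul_pd_eq_zero_of_sum_pd_eq_zero (p := 3) (q := 3 / 2)
    hm (contDiff_prim_comp ha.continuous hr) hm3 hpm (ha.memLp_prim_comp hr6)
    (fun i => by rw [hpd]; exact ha.memLp_comp_mul_pd hr6 (hpr i)) hdiv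

lemma integral_mul_comp_mul_pd_eq_neg (ha : IsRenormWeight a C) (hr : ContDiff ℝ 1 r)
    (hr6 : MemLp r 6) {i : Fin 3} (hpr : MemLp (pd r i) 6) {f : E3 → ℝ} {df : Fin 3 → E3 → ℝ}
    {fn : ℕ → E3 → ℝ} (hf : IsD012Approx f df fn) :
    ∫ x, f x * (r x * a (r x) * pd r i x)
      = - ∫ x, df i x * prim (fun t => t * a t) (r x) := by
  have hpd := pd_prim_comp ha.continuous_id_mul hr i
  simpa only [hpd] using hf.integral_mul_pd_eq_neg (contDiff_prim_comp ha.continuous_id_mul hr)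
    (ha.memLp_prim_id_mul_comp hr6) i (by rw [hpd]; exact ha.memLp_mul_comp_mul_pd hr6 hpr)

end IsRenormWeight

section Renormalization

variable {a : ℝ → ℝ} {C : ℝ} {ρ : E3 → ℝ} {v : Fin 3 → E3 → ℝ} {dv : Fin 3 → Fin 3 → E3 → ℝ}
  {vn : Fin 3 → ℕ → E3 → ℝ}

lemma sum_integral_mollCommutator_mul_eq (ha : IsRenormWeight a C) (hρ : MemLp ρ 6)
    (hv : ∀ i, IsD012Approx (v i) (dv i) (vn i)) (hdiv : WeaklyDivFree fun i x => ρ x * v i x)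
    {k : E3 → ℝ} (hk : IsTest univ k) :
    ∑ i, ∫ x, mollCommutator ρ (v i) k x * (a ((ρ ⋆ k) x) * pd (ρ ⋆ k) i x)
      = ∑ i, ∫ x, dv i i x * prim (fun t => t * a t) ((ρ ⋆ k) x) := by
  set r := ρ ⋆ k
  set m : Fin 3 → E3 → ℝ := fun i => (fun x => ρ x * v i x) ⋆ k
  have hf (i : Fin 3) : MemLp (fun x => ρ x * v i x) 3 := (hv i).memLp.mul hρ
  have hfl (i : Fin 3) : LocallyIntegrable fun x => ρ x * v i x :=
    (hf i).locallyIntegrable (by norm_num)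
  have hr : ContDiff ℝ 1 r := hk.contDiff_convolution (hρ.locallyIntegrable (by norm_num)) 1
  have r6 : MemLp r 6 := hk.memLp_convolution (by norm_num) (by simp) hρ
  have pr6 (i : Fin 3) : MemLp (pd r i) 6 := hk.memLp_pd_convolution (by norm_num) (by simp) hρ i
  have m3 (i : Fin 3) : MemLp (m i) 3 := hk.memLp_convolution (by norm_num) (by simp) (hf i)
  have mass : ∑ i, ∫ x, m i x * (a (r x) * pd r i x) = 0 :=
    ha.sum_integral_mul_comp_mul_pd_eq_zero hr r6 pr6
      (fun i => hk.contDiff_convolution (hfl i) 1) m3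
      (fun i => hk.memLp_pd_convolution (by norm_num) (by simp) (hf i) i)
      (hdiv.sum_pd_convolution_eq_zero hfl hk)
  have split (i : Fin 3) : ∫ x, mollCommutator ρ (v i) k x * (a (r x) * pd r i x)
      = (∫ x, m i x * (a (r x) * pd r i x)) - ∫ x, v i x * (r x * a (r x) * pd r i x) := by
    have hm : Integrable fun x => m i x * (a (r x) * pd r i x) :=
      (m3 i).integrable_mul (ha.memLp_comp_mul_pd r6 (pr6 i))
    have hvr : Integrable fun x => v i x * (r x * a (r x) * pd r i x) :=
      (hv i).memLp.integrable_mul (ha.memLp_mul_comp_mul_pd r6 (pr6 i))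
    rw [← integral_sub hm hvr]
    congr 1; ext x; simp only [mollCommutator, m, r]; ring
  simp only [split, ha.integral_mul_comp_mul_pd_eq_neg hr r6 (pr6 _) (hv _), sub_neg_eq_add,
    Finset.sum_add_distrib, mass, zero_add]

lemma exists_forall_norm_le_eLpNorm_comp_sub_right_sub_le {h : E3 → ℝ} {p : ℝ≥0∞} (hp : 1 ≤ p)
    (hp' : p ≠ ∞) (hh : MemLp h p) {δ : ℝ≥0∞} (hδ : 0 < δ) :
    ∃ ε > 0, ∀ z : E3, ‖z‖ ≤ ε → eLpNorm (fun x => h (x - z) - h x) p volume ≤ δ := by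
  have := (tendsto_eLpNorm_comp_sub_right_sub hp hp' hh).eventually_le_const hδ
  obtain ⟨ε, hε, hball⟩ := Metric.eventually_nhds_iff_ball.1 this
  exact ⟨ε / 2, by positivity, fun z hz => hball z (mem_ball_zero_iff.2 (by linarith))⟩

lemma IsRenormWeight.eLpNorm_comp_le (ha : IsRenormWeight a C) (r : E3 → ℝ) (p : ℝ≥0∞) :
    eLpNorm (fun x => a (r x)) p volume ≤ ENNReal.ofReal C * eLpNorm r p volume :=
  eLpNorm_le_mul_eLpNorm_of_ae_le_mul (ae_of_all _ fun x => ha.abs_le (r x)) p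

namespace IsMollifier

variable {ε : ℝ} {M δ : ℝ≥0∞} {k f : E3 → ℝ} {df : Fin 3 → E3 → ℝ} {fn : ℕ → E3 → ℝ}

lemma eLpNorm_mollCommutator_le (hk : IsMollifier ε M k) (hρ : MemLp ρ 6)
    (hf : IsD012Approx f df fn) : eLpNorm (mollCommutator ρ f k) (3 / 2) volume
      ≤ M * (eLpNorm ρ 6 volume * (ENNReal.ofReal ε * ∑ j, eLpNorm (df j) 2 volume)) := by
  have hρf : MemLp (fun y => ρ y * f y) 3 := hf.memLp.mul hρ
  refine (_root_.eLpNorm_mollCommutator_le (p := 6) (q := 2)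
    (by norm_num [ENNReal.le_div_iff_mul_le]) (by finiteness) hρ hf.memLp.1
    (hρf.locallyIntegrable (by norm_num)) hk.isTest.1.continuous hk.isTest.2.1
    fun z hz => (hf.eLpNorm_comp_sub_right_sub_le z).trans (mul_le_mul_left ?_ _)).trans
    (mul_le_mul_left hk.eLpNorm_le _)
  rw [← ofReal_norm]
  exact ENNReal.ofReal_le_ofReal (hk.isTest.norm_le_of_ne_zero hz)

-- The factor `ε` gained from `∇f ∈ L²` in the commutator cancels the `ε⁻¹` lost on `∇(ρ ⋆ k)`.
lemma enorm_integral_mollCommutator_mul_le (hk : IsMollifier ε M k) (hε : 0 < ε)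
    (ha : IsRenormWeight a C) (hρ : MemLp ρ 6)
    (hδ : ∀ z : E3, ‖z‖ ≤ ε → eLpNorm (fun x => ρ (x - z) - ρ x) 6 volume ≤ δ)
    (hf : IsD012Approx f df fn) (i : Fin 3) :
    ‖∫ x, mollCommutator ρ f k x * (a ((ρ ⋆ k) x) * pd (ρ ⋆ k) i x)‖ₑ
      ≤ M * (eLpNorm ρ 6 volume * ∑ j, eLpNorm (df j) 2 volume)
        * (ENNReal.ofReal C * (M * eLpNorm ρ 6 volume) * M) * δ := by
  have hρf : MemLp (fun y => ρ y * f y) 3 := hf.memLp.mul hρ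
  have hr := hk.isTest.contDiff_convolution (hρ.locallyIntegrable (by norm_num)) 1
  have commutator_meas : AEStronglyMeasurable (mollCommutator ρ f k) :=
    (hk.isTest.memLp_convolution (by norm_num) (by simp) hρf).1.sub
      (hr.continuous.aestronglyMeasurable.mul hf.memLp.1)
  have weight_meas : AEStronglyMeasurable fun x => a ((ρ ⋆ k) x) :=
    (ha.continuous.comp hr.continuous).aestronglyMeasurable
  have pd_meas : AEStronglyMeasurable (pd (ρ ⋆ k) i) := (continuous_pd hr i).aestronglyMeasurable
  calc ‖∫ x, mollCommutator ρ f k x * (a ((ρ ⋆ k) x) * pd (ρ ⋆ k) i x)‖ₑ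
      ≤ eLpNorm (mollCommutator ρ f k) (3 / 2) volume *
          eLpNorm (fun x => a ((ρ ⋆ k) x) * pd (ρ ⋆ k) i x) 3 volume :=
        enorm_integral_mul_le_mul_eLpNorm commutator_meas (weight_meas.mul pd_meas)
    _ ≤ eLpNorm (mollCommutator ρ f k) (3 / 2) volume *
          (eLpNorm (fun x => a ((ρ ⋆ k) x)) 6 volume * eLpNorm (pd (ρ ⋆ k) i) 6 volume) := by
        gcongr
        exact eLpNorm_mul_le_mul_eLpNorm weight_meas pd_meas
    _ ≤ M * (eLpNorm ρ 6 volume * (ENNReal.ofReal ε * ∑ j, eLpNorm (df j) 2 volume)) *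
          (ENNReal.ofReal C * (M * eLpNorm ρ 6 volume) * (ENNReal.ofReal ε⁻¹ * M * δ)) := by
        gcongr
        · exact hk.eLpNorm_mollCommutator_le hρ hf
        · exact (ha.eLpNorm_comp_le _ 6).trans
            (mul_le_mul_right (hk.eLpNorm_convolution_le (by norm_num) (by simp) hρ.1) _)
        · exact hk.eLpNorm_pd_convolution_le (by norm_num) (by simp) hρ hδ i
    _ = ENNReal.ofReal ε * ENNReal.ofReal ε⁻¹ *
          (M * (eLpNorm ρ 6 volume * ∑ j, eLpNorm (df j) 2 volume) *
          (ENNReal.ofReal C * (M * eLpNorm ρ 6 volume) * M) * δ) := by ring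
    _ = _ := by
        rw [← ENNReal.ofReal_mul hε.le, mul_inv_cancel₀ hε.ne', ENNReal.ofReal_one, one_mul]

end IsMollifier

lemma exists_seq_isMollifier (hρ : MemLp ρ 6) : ∃ (M : ℝ≥0∞) (δ : ℕ → ℝ≥0∞) (ε : ℕ → ℝ)
    (k : ℕ → E3 → ℝ), M ≠ ∞ ∧ Tendsto δ atTop (𝓝 0) ∧ ∀ n, 0 < ε n ∧ IsMollifier (ε n) M (k n) ∧
      ∀ z : E3, ‖z‖ ≤ ε n → eLpNorm (fun x => ρ (x - z) - ρ x) 6 volume ≤ δ n := by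
  obtain ⟨M, hM, exists_mollifier⟩ := exists_isMollifier
  have δ_pos (n : ℕ) : 0 < ENNReal.ofReal (1 / (n + 1)) := by positivity
  choose ε hε hδ using fun n : ℕ => exists_forall_norm_le_eLpNorm_comp_sub_right_sub_le
    (by norm_num) (by simp) hρ (δ_pos n)
  choose k hk using fun n => exists_mollifier (ε n) (hε n)
  refine ⟨M, _, ε, k, hM, ?_, fun n => ⟨hε n, hk n, hδ n⟩⟩
  simpa using ENNReal.tendsto_ofReal tendsto_one_div_add_atTop_nhds_zero_nat

lemma IsRenormWeight.sum_integral_mul_prim_eq_zero (ha : IsRenormWeight a C) (hρ : MemLp ρ 6)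
    (hv : ∀ i, IsD012Approx (v i) (dv i) (vn i))
    (hdiv : WeaklyDivFree fun i x => ρ x * v i x) :
    ∑ i, ∫ x, dv i i x * prim (fun t => t * a t) (ρ x) = 0 := by
  obtain ⟨M, δ, ε, k, hM, hδ, h⟩ := exists_seq_isMollifier hρ
  have mollified : TendstoInLp 6 volume (fun n => ρ ⋆ k n) atTop ρ :=
    .of_le (ε := fun n => M * δ n)
      (fun n => (h n).2.1.isTest.memLp_convolution (by norm_num) (by simp) hρ) hρ
      (by simpa using ENNReal.Tendsto.const_mul hδ (.inr hM))
      fun n => (h n).2.1.eLpNorm_convolution_sub_le (by norm_num) (by simp) hρ (h n).2.2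
  have limit : Tendsto (fun n => ∑ i, ∫ x, dv i i x * prim (fun t => t * a t) ((ρ ⋆ k n) x)) atTop
      (𝓝 (∑ i, ∫ x, dv i i x * prim (fun t => t * a t) (ρ x))) :=
    tendsto_finsetSum _ fun i _ =>
      (TendstoInLp.const ((hv i).memLp_grad i)).integral_mul
        (ha.tendstoInLp_prim_id_mul_comp mollified)
  refine tendsto_nhds_unique limit ?_
  have identity (n : ℕ) := sum_integral_mollCommutator_mul_eq ha hρ hv hdiv
    (k := k n) ⟨(h n).2.1.isTest.1, (h n).2.1.isTest.2.1, subset_univ _⟩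
  simp only [← identity]
  rw [← Finset.sum_const_zero (s := Finset.univ (α := Fin 3))]
  refine tendsto_finsetSum _ fun i _ => tendsto_zero_iff_enorm_tendsto_zero.2 ?_
  refine tendsto_of_tendsto_of_tendsto_of_le_of_le tendsto_const_nhds ?_ (fun _ => zero_le)
    fun n => (h n).2.1.enorm_integral_mollCommutator_mul_le (h n).1 ha hρ (h n).2.2 (hv i) i
  have grad_fin : ∑ j, eLpNorm (dv i j) 2 volume ≠ ∞ :=
    ENNReal.sum_ne_top.2 fun j _ => ((hv i).memLp_grad j).2.ne
  simpa using ENNReal.Tendsto.const_mul hδ (.inr (by finiteness [hρ.2.ne]))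

/-- The weight `γ s^{γ-2}` made constant outside `[0, N]`; untruncated,
`prim (t ↦ t * γ t^{γ-2})` is the pressure `s ^ γ`. -/
def truncPow (γ N s : ℝ) : ℝ := γ * (min (max s 0) N) ^ (γ - 2)

section TruncPow

variable {γ N s : ℝ}

lemma continuous_truncPow (hγ : 2 ≤ γ) : Continuous (truncPow γ N) :=
  continuous_const.mul ((by fun_prop : Continuous fun s : ℝ => min (max s 0) N).rpow_const
    fun _ => .inr (by linarith))

lemma truncPow_nonneg (hγ : 2 ≤ γ) (hN : 0 ≤ N) : 0 ≤ truncPow γ N s := by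
  have : 0 ≤ min (max s 0) N := le_min (le_max_right _ _) hN
  unfold truncPow
  positivity

lemma abs_truncPow_le (hγ : 2 ≤ γ) (hN : 1 ≤ N) {j : ℕ} (hj : j ≤ γ - 2) :
    |truncPow γ N s| ≤ γ * N ^ (γ - 2) * |s| ^ j := by
  rw [abs_of_nonneg (truncPow_nonneg hγ (by linarith)), truncPow]
  set b := min (max s 0) N
  have hb : 0 ≤ b := le_min (le_max_right _ _) (by linarith)
  have hbN : b ≤ N := min_le_right _ _
  have hbs : b ≤ |s| := (min_le_left _ _).trans (max_le (le_abs_self s) (abs_nonneg s))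
  calc γ * b ^ (γ - 2) = γ * (b ^ j * b ^ (γ - 2 - j)) := by
        rw [← Real.rpow_natCast b j, ← Real.rpow_add_of_nonneg hb (by positivity) (by linarith),
          add_sub_cancel]
    _ ≤ γ * (|s| ^ j * N ^ (γ - 2 - j)) := by gcongr
    _ ≤ γ * (|s| ^ j * N ^ (γ - 2)) := by
        gcongr 2
        exact Real.rpow_le_rpow_of_exponent_le hN (by linarith [j.cast_nonneg (α := ℝ)])
    _ = γ * N ^ (γ - 2) * |s| ^ j := by ring

lemma isRenormWeight_truncPow (hγ : 5 ≤ γ) (hN : 1 ≤ N) :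
    IsRenormWeight (truncPow γ N) (γ * N ^ (γ - 2)) where
  continuous := continuous_truncPow (by linarith)
  abs_le s := by
    simpa using abs_truncPow_le (j := 1) (s := s) (by linarith) hN (by norm_num; linarith)
  abs_le_cube s := abs_truncPow_le (by linarith) hN (by norm_num; linarith)

lemma id_mul_truncPow_eq (hγ : 2 ≤ γ) (hs : 0 ≤ s) (hsN : s ≤ N) :
    s * truncPow γ N s = γ * s ^ (γ - 1) := by
  have split_pow : s ^ (γ - 1) = s * s ^ (γ - 2) := by
    rw [← Real.rpow_one_add' hs (by linarith)]
    ring_nf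
  rw [truncPow, max_eq_left hs, min_eq_left hsN, split_pow]
  ring

lemma id_mul_truncPow_le (hγ : 2 ≤ γ) (hN : 0 ≤ N) (hs : 0 ≤ s) :
    s * truncPow γ N s ≤ γ * s ^ (γ - 1) := by
  rw [← id_mul_truncPow_eq hγ hs le_rfl, truncPow, truncPow, max_eq_left hs, min_self]
  have : 0 ≤ min s N := le_min hs hN
  gcongr
  exact min_le_left _ _

lemma prim_const_mul_rpow_sub_one (hγ : 0 < γ) : prim (fun t => γ * t ^ (γ - 1)) s = s ^ γ := by
  rw [prim, intervalIntegral.integral_const_mul, integral_rpow (.inl (by linarith)),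
    sub_add_cancel, Real.zero_rpow hγ.ne', sub_zero, mul_div_cancel₀ _ hγ.ne']

lemma prim_id_mul_truncPow_eq (hγ : 2 ≤ γ) (hs : 0 ≤ s) (hsN : s ≤ N) :
    prim (fun t => t * truncPow γ N t) s = s ^ γ := by
  rw [← prim_const_mul_rpow_sub_one (s := s) (by linarith : 0 < γ)]
  refine intervalIntegral.integral_congr fun t ht => ?_
  rw [uIcc_of_le hs] at ht
  exact id_mul_truncPow_eq hγ ht.1 (ht.2.trans hsN)

lemma abs_prim_id_mul_truncPow_le (hγ : 2 ≤ γ) (hN : 0 ≤ N) (hs : 0 ≤ s) :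
    |prim (fun t => t * truncPow γ N t) s| ≤ s ^ γ := by
  have hpow : Continuous fun t : ℝ => γ * t ^ (γ - 1) :=
    continuous_const.mul (continuous_id.rpow_const fun _ => .inr (by linarith))
  have nonneg : 0 ≤ prim (fun t => t * truncPow γ N t) s :=
    intervalIntegral.integral_nonneg hs fun t ht => mul_nonneg ht.1 (truncPow_nonneg hγ hN)
  rw [abs_of_nonneg nonneg, ← prim_const_mul_rpow_sub_one (s := s) (by linarith : 0 < γ)]
  exact intervalIntegral.integral_mono_on hs
    ((continuous_id.mul (continuous_truncPow hγ)).intervalIntegrable _ _)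
    (hpow.intervalIntegrable _ _) fun t ht => id_mul_truncPow_le hγ hN ht.1

lemma sum_integral_mul_rpow_eq_zero (hγ : 5 ≤ γ) (hρ : MemLp ρ 6) (hρ0 : ∀ᵐ x, 0 ≤ ρ x)
    (hργ : MemLp (fun x => ρ x ^ γ) 2) (hv : ∀ i, IsD012Approx (v i) (dv i) (vn i))
    (hdiv : WeaklyDivFree fun i x => ρ x * v i x) :
    ∑ i, ∫ x, dv i i x * ρ x ^ γ = 0 := by
  have hγ2 : 2 ≤ γ := by linarith
  let P (n : ℕ) : ℝ → ℝ := prim fun t => t * truncPow γ (n + 1) t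
  have weight (n : ℕ) := isRenormWeight_truncPow hγ (by simp : 1 ≤ (n : ℝ) + 1)
  have truncated (n : ℕ) : ∑ i, ∫ x, dv i i x * P n (ρ x) = 0 :=
    (weight n).sum_integral_mul_prim_eq_zero hρ hv hdiv
  suffices Tendsto (fun n => ∑ i, ∫ x, dv i i x * P n (ρ x)) atTop
      (𝓝 (∑ i, ∫ x, dv i i x * ρ x ^ γ)) by
    simp only [truncated] at this
    exact tendsto_nhds_unique this tendsto_const_nhds
  refine tendsto_finsetSum _ fun i _ => ?_
  have dominating : Integrable fun x => dv i i x * ρ x ^ γ :=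
    ((hv i).memLp_grad i).integrable_mul hργ
  refine tendsto_integral_of_dominated_convergence _ (fun n => ?_) dominating.norm (fun n => ?_) ?_
  · exact ((hv i).memLp_grad i).1.mul ((weight n).memLp_prim_id_mul_comp hρ).1
  · filter_upwards [hρ0] with x hx
    rw [norm_mul, norm_mul]
    gcongr
    exact (abs_prim_id_mul_truncPow_le hγ2 (by positivity) hx).trans (le_abs_self _)
  · filter_upwards [hρ0] with x hx
    refine tendsto_const_nhds.congr' ?_
    obtain ⟨n₀, hn₀⟩ := exists_nat_ge (ρ x)
    filter_upwards [eventually_ge_atTop n₀] with n hn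
    have : (n₀ : ℝ) ≤ n := by exact_mod_cast hn
    exact congrArg _ (prim_id_mul_truncPow_eq hγ2 hx (by linarith)).symm

end TruncPow

end Renormalization

/-! ### Energy identities -/

namespace IsD012Approx

variable {f g : E3 → ℝ} {df dg : Fin 3 → E3 → ℝ} {fn gn : ℕ → E3 → ℝ}

lemma integral_grad_mul_grad_swap (hf : IsD012Approx f df fn) (hg : IsD012Approx g dg gn)
    (i j : Fin 3) : ∫ x, df j x * dg i x = ∫ x, df i x * dg j x := by
  have lim (a b : Fin 3) := (hf.tendsto_pd a).integral_mul (hg.tendsto_pd b)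
  have swap (n : ℕ) := integral_pd_mul_pd_swap (hf.isTest n).contDiff_one
    (hg.isTest n).contDiff_two (hf.isTest n).2.1 i j
  exact tendsto_nhds_unique (lim j i) ((lim i j).congr fun n => (swap n).symm)

lemma ae_eq_zero_of_grad_ae_eq_zero (hf : IsD012Approx f df fn) (h : ∀ j, df j =ᵐ[volume] 0) :
    f =ᵐ[volume] 0 := by
  obtain ⟨C, sobolev⟩ := exists_eLpNorm_six_le_sum_eLpNorm_pd
  have grad_lim (j : Fin 3) : Tendsto (fun n => eLpNorm (pd (fn n) j) 2 volume) atTop (𝓝 0) := by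
    refine (hf.tendsto_pd j).tendsto.congr fun n => eLpNorm_congr_ae ?_
    filter_upwards [h j] with x hx
    simp [hx]
  have bound_lim : Tendsto (fun n => C * ∑ j, eLpNorm (pd (fn n) j) 2 volume) atTop (𝓝 0) := by
    simpa using ENNReal.Tendsto.const_mul (tendsto_finsetSum _ fun j _ => grad_lim j)
      (.inr ENNReal.coe_ne_top)
  have norm_lim : Tendsto (fun n => eLpNorm (fn n) 6 volume) atTop (𝓝 0) :=
    tendsto_of_tendsto_of_tendsto_of_le_of_le tendsto_const_nhds bound_lim (fun _ => zero_le)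
      fun n => sobolev _ (hf.isTest n).contDiff_one (hf.isTest n).2.1
  have to_zero : TendstoInMeasure volume fn atTop (0 : E3 → ℝ) :=
    tendstoInMeasure_of_tendsto_eLpNorm (p := 6) (by norm_num)
      (fun n => (hf.tendsto.memLp n).1) aestronglyMeasurable_zero (by simpa using norm_lim)
  have to_f : TendstoInMeasure volume fn atTop f :=
    tendstoInMeasure_of_tendsto_eLpNorm (p := 6) (by norm_num)
      (fun n => (hf.tendsto.memLp n).1) hf.memLp.1 hf.tendsto.tendsto
  exact tendstoInMeasure_ae_unique to_f to_zero

end IsD012Approx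

section Convection

variable {m v : Fin 3 → E3 → ℝ} {ρ f : E3 → ℝ}

lemma WeaklyDivFree.sum_integral_mul_grad_eq_zero (hm : WeaklyDivFree m)
    (hm3 : ∀ j, MemLp (m j) 3) {df : Fin 3 → E3 → ℝ} {fn : ℕ → E3 → ℝ}
    (hf : IsD012Approx f df fn) : ∑ j, ∫ x, m j x * f x * df j x = 0 := by
  have smooth (n : ℕ) : ∑ j, ∫ x, m j x * fn n x * pd (fn n) j x = 0 := by
    have test := hm _ ((hf.isTest n).mul (hf.isTest n))
    have half (j : Fin 3) : ∫ x, m j x * pd (fun y => fn n y * fn n y) j x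
        = 2 * ∫ x, m j x * fn n x * pd (fn n) j x := by
      rw [← integral_const_mul]
      congr 1; ext x
      rw [pd_mul (hf.isTest n).contDiff_one (hf.isTest n).contDiff_one]
      ring
    simp only [half, ← Finset.mul_sum] at test
    linarith
  have mf (j : Fin 3) : TendstoInLp 2 volume (fun n x => m j x * fn n x) atTop _ :=
    (TendstoInLp.const (hm3 j)).mul (by norm_num) hf.tendsto
  have limit := tendsto_finsetSum Finset.univ fun j _ => (mf j).integral_mul (hf.tendsto_pd j)
  simp only [smooth] at limit
  exact tendsto_nhds_unique limit tendsto_const_nhds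

lemma WeaklyDivFree.sum_integral_mul_mul_eq_zero (hdiv : WeaklyDivFree fun i x => ρ x * v i x)
    (hv : ∀ i, MemLp (v i) 6) {r q : ℝ≥0∞} [ENNReal.HolderTriple r q (6 / 5)] (hρ : MemLp ρ r)
    {Gn : ℕ → E3 → ℝ} (hGn : ∀ n, IsTest univ (Gn n)) {g : Fin 3 → E3 → ℝ}
    (hg : ∀ i, TendstoInLp q volume (fun n => pd (Gn n) i) atTop (g i)) :
    ∑ i, ∫ x, ρ x * g i x * v i x = 0 := by
  have smooth (n : ℕ) : ∑ i, ∫ x, ρ x * pd (Gn n) i x * v i x = 0 := by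
    simpa only [mul_right_comm] using hdiv (Gn n) (hGn n)
  have force (i : Fin 3) : TendstoInLp (6 / 5) volume (fun n x => ρ x * pd (Gn n) i x) atTop _ :=
    (TendstoInLp.const hρ).mul (by norm_num [ENNReal.le_div_iff_mul_le]) (hg i)
  have limit := tendsto_finsetSum Finset.univ fun i _ =>
    (force i).integral_mul (TendstoInLp.const (hv i))
  simp only [smooth] at limit
  exact tendsto_nhds_unique limit tendsto_const_nhds

end Convection

/-- The equation `∇p = div A + f` in the sense of distributions. -/
def WeakMomentumBalance (p : E3 → ℝ) (A : Fin 3 → Fin 3 → E3 → ℝ) (f : Fin 3 → E3 → ℝ) : Prop :=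
  ∀ φ : Fin 3 → E3 → ℝ, (∀ i, IsTest univ (φ i)) →
    ∑ i, ∫ x, p x * pd (φ i) i x
      = (∑ i, ∑ j, ∫ x, A i j x * pd (φ i) j x) - ∑ i, ∫ x, f i x * φ i x

namespace WeakMomentumBalance

variable {p : E3 → ℝ} {A : Fin 3 → Fin 3 → E3 → ℝ} {f : Fin 3 → E3 → ℝ}

-- Testing with `∇w` turns the balance into `Δp = div (div A + f)`.
lemma memLp_two (h : WeakMomentumBalance p A f) (hp : MemLp p 1) (hA : ∀ i j, MemLp (A i j) 2)
    (hf : ∀ i, MemLp (f i) (6 / 5)) : MemLp p 2 := by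
  refine memLp_two_of_integral_mul_lap_eq hp hA hf fun w hw => ?_
  have integrable (i : Fin 3) : Integrable fun x => p x * pd (pd w i) i x :=
    memLp_one_iff_integrable.1 ((((hw.pd i).pd i).memLp ∞).mul hp)
  rw [← h (pd w) hw.pd, ← integral_finsetSum _ fun i _ => integrable i]
  simp only [lap, Finset.mul_sum]

lemma test_isD012Approx (h : WeakMomentumBalance p A f) (hp : MemLp p 2)
    (hA : ∀ i j, MemLp (A i j) 2) (hf : ∀ i, MemLp (f i) (6 / 5)) {v : Fin 3 → E3 → ℝ}
    {dv : Fin 3 → Fin 3 → E3 → ℝ} {vn : Fin 3 → ℕ → E3 → ℝ}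
    (hv : ∀ i, IsD012Approx (v i) (dv i) (vn i)) :
    ∑ i, ∫ x, p x * dv i i x
      = (∑ i, ∑ j, ∫ x, A i j x * dv i j x) - ∑ i, ∫ x, f i x * v i x := by
  have pressure := tendsto_finsetSum Finset.univ fun i _ =>
    (TendstoInLp.const hp).integral_mul ((hv i).tendsto_pd i)
  have stress := tendsto_finsetSum Finset.univ fun i _ => tendsto_finsetSum Finset.univ fun j _ =>
    (TendstoInLp.const (hA i j)).integral_mul ((hv i).tendsto_pd j)
  have force := tendsto_finsetSum Finset.univ fun i _ =>
    (TendstoInLp.const (hf i)).integral_mul (hv i).tendsto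
  exact tendsto_nhds_unique pressure <| (stress.sub force).congr fun n =>
    (h (fun i => vn i n) fun i => (hv i).isTest n).symm

end WeakMomentumBalance

section Dissipation

variable {μ η : ℝ} {v : Fin 3 → E3 → ℝ} {dv : Fin 3 → Fin 3 → E3 → ℝ} {vn : Fin 3 → ℕ → E3 → ℝ}

lemma memLp_Smat {p : ℝ≥0∞} (hdv : ∀ i j, MemLp (dv i j) p) (i j : Fin 3) :
    MemLp (fun x => Smat μ η (fun a b => dv a b x) i j) p := by
  have trace : MemLp (fun x => ∑ k, dv k k x) p := memLp_finsetSum _ fun k _ => hdv k k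
  exact ((((hdv i j).add (hdv j i)).sub ((trace.const_mul (2 / 3)).mul_const _)).const_mul μ).add
    ((trace.const_mul η).mul_const _)

lemma sum_Smat_mul_eq (d : Fin 3 → Fin 3 → ℝ) :
    ∑ i, ∑ j, Smat μ η d i j * d i j = ∑ i, ∑ j,
      (μ * (d i j * d i j) + μ * (d i j * d j i) + (η - 2 / 3 * μ) * (d i i * d j j)) := by
  simp only [Smat, Fin.sum_univ_three]
  simp
  ring

lemma integral_sum_sum {F : Fin 3 → Fin 3 → E3 → ℝ} (hF : ∀ i j, Integrable (F i j)) :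
    ∫ x, ∑ i, ∑ j, F i j x = ∑ i, ∑ j, ∫ x, F i j x := by
  rw [integral_finsetSum _ fun i _ => integrable_finsetSum _ fun j _ => hF i j]
  exact Finset.sum_congr rfl fun i _ => integral_finsetSum _ fun j _ => hF i j

-- Integrating by parts twice, `∫ ∂ⱼvᵢ ∂ᵢvⱼ = ∫ ∂ᵢvᵢ ∂ⱼvⱼ`, which makes the form coercive.
lemma sum_integral_Smat_mul_eq (hv : ∀ i, IsD012Approx (v i) (dv i) (vn i)) :
    ∑ i, ∑ j, ∫ x, Smat μ η (fun a b => dv a b x) i j * dv i j x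
      = μ * (∑ i, ∑ j, ∫ x, dv i j x * dv i j x) + (η + μ / 3) * ∫ x, (∑ i, dv i i x) ^ 2 := by
  have hdv (i j : Fin 3) : MemLp (dv i j) 2 := (hv i).memLp_grad j
  have integrable (i j k l : Fin 3) : Integrable fun x => dv i j x * dv k l x :=
    (hdv i j).integrable_mul (hdv k l)
  have integrable_Smat (i j : Fin 3) :
      Integrable fun x => Smat μ η (fun a b => dv a b x) i j * dv i j x :=
    (memLp_Smat hdv i j).integrable_mul (hdv i j)
  have integrable_sym (i j : Fin 3) :
      Integrable fun x => μ * (dv i j x * dv i j x) + μ * (dv i j x * dv j i x) :=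
    ((integrable i j i j).const_mul μ).add ((integrable i j j i).const_mul μ)
  have integrable_sum (i j : Fin 3) : Integrable fun x => μ * (dv i j x * dv i j x)
      + μ * (dv i j x * dv j i x) + (η - 2 / 3 * μ) * (dv i i x * dv j j x) :=
    (integrable_sym i j).add ((integrable i i j j).const_mul _)
  have expand (i j : Fin 3) : ∫ x, (μ * (dv i j x * dv i j x) + μ * (dv i j x * dv j i x)
        + (η - 2 / 3 * μ) * (dv i i x * dv j j x))
      = μ * (∫ x, dv i j x * dv i j x) + (η + μ / 3) * ∫ x, dv i i x * dv j j x := by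
    rw [integral_add (integrable_sym i j) ((integrable i i j j).const_mul _),
      integral_add ((integrable i j i j).const_mul μ) ((integrable i j j i).const_mul μ),
      integral_const_mul, integral_const_mul, integral_const_mul,
      (hv i).integral_grad_mul_grad_swap (hv j) i j]
    ring
  have div_sq : ∫ x, (∑ i, dv i i x) ^ 2 = ∑ i, ∑ j, ∫ x, dv i i x * dv j j x := by
    simp only [sq, Finset.sum_mul_sum]
    exact integral_sum_sum fun i j => integrable i i j j
  rw [← integral_sum_sum integrable_Smat]
  simp only [fun x => sum_Smat_mul_eq (μ := μ) (η := η) fun a b => dv a b x]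
  rw [integral_sum_sum integrable_sum, div_sq]
  simp only [expand, Finset.sum_add_distrib, Finset.mul_sum]

lemma ae_eq_zero_of_sum_integral_Smat_mul_eq_zero (hμ : 0 < μ) (hη : 0 ≤ η)
    (hv : ∀ i, IsD012Approx (v i) (dv i) (vn i))
    (h : ∑ i, ∑ j, ∫ x, Smat μ η (fun a b => dv a b x) i j * dv i j x = 0) (i : Fin 3) :
    v i =ᵐ[volume] 0 := by
  have sq_nonneg (i j : Fin 3) : 0 ≤ ∫ x, dv i j x * dv i j x :=
    integral_nonneg fun x => mul_self_nonneg _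
  have row_nonneg (i : Fin 3) : 0 ≤ ∑ j, ∫ x, dv i j x * dv i j x :=
    Finset.sum_nonneg fun j _ => sq_nonneg i j
  have sum_eq_zero : ∑ i, ∑ j, ∫ x, dv i j x * dv i j x = 0 := by
    rw [sum_integral_Smat_mul_eq hv] at h
    have div_nonneg : 0 ≤ (η + μ / 3) * ∫ x, (∑ i, dv i i x) ^ 2 := by positivity
    have grad_nonneg : 0 ≤ ∑ i, ∑ j, ∫ x, dv i j x * dv i j x :=
      Finset.sum_nonneg fun i _ => row_nonneg i
    have mul_eq_zero : μ * ∑ i, ∑ j, ∫ x, dv i j x * dv i j x = 0 := by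
      linarith [mul_nonneg hμ.le grad_nonneg]
    exact (_root_.mul_eq_zero.1 mul_eq_zero).resolve_left hμ.ne'
  refine (hv i).ae_eq_zero_of_grad_ae_eq_zero fun j => ?_
  have row_eq_zero := (Finset.sum_eq_zero_iff_of_nonneg fun i _ => row_nonneg i).1 sum_eq_zero i
    (Finset.mem_univ i)
  have sq_eq_zero := (Finset.sum_eq_zero_iff_of_nonneg fun j _ => sq_nonneg i j).1 row_eq_zero j
    (Finset.mem_univ j)
  rw [integral_eq_zero_iff_of_nonneg (fun x => mul_self_nonneg _)
    (((hv i).memLp_grad j).integrable_mul ((hv i).memLp_grad j))] at sq_eq_zero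
  filter_upwards [sq_eq_zero] with x hx
  simpa using hx

end Dissipation

/-! ### Weak solutions -/

lemma exists_holderTriple_six_fifths {γ q : ℝ} (hγ : 6 ≤ γ) (hq1 : 6 * γ / (5 * γ - 6) ≤ q)
    (hq2 : q ≤ 3 / 2) :
    ∃ r, 6 ≤ r ∧ r ≤ ENNReal.ofReal γ ∧ ENNReal.HolderTriple r (ENNReal.ofReal q) (6 / 5) := by
  have den_pos : 0 < 5 * γ - 6 := by linarith
  have q_pos : 0 < q := lt_of_lt_of_le (by positivity) hq1
  have inv_q_le : q⁻¹ ≤ 5 / 6 - γ⁻¹ := by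
    calc q⁻¹ ≤ (6 * γ / (5 * γ - 6))⁻¹ := by gcongr
      _ = 5 / 6 - γ⁻¹ := by field_simp
  have le_inv_q : 2 / 3 ≤ q⁻¹ := by
    calc (2 / 3 : ℝ) = (3 / 2)⁻¹ := by norm_num
      _ ≤ q⁻¹ := by gcongr
  have inv_γ_pos : 0 < γ⁻¹ := by positivity
  have inv_r_pos : 0 < 5 / 6 - q⁻¹ := by linarith
  refine ⟨ENNReal.ofReal (5 / 6 - q⁻¹)⁻¹, ?_, ?_, ?_⟩
  · rw [← ENNReal.ofReal_ofNat]
    refine ENNReal.ofReal_le_ofReal ((le_inv_comm₀ (by norm_num) inv_r_pos).2 ?_)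
    linarith
  · refine ENNReal.ofReal_le_ofReal ((inv_le_comm₀ inv_r_pos (by positivity)).2 ?_)
    linarith
  · have triple : Real.HolderTriple (5 / 6 - q⁻¹)⁻¹ q (6 / 5) :=
      ⟨by rw [inv_inv]; norm_num, by positivity, q_pos⟩
    simpa [ENNReal.ofReal_div_of_pos] using triple.ennrealOfReal

lemma memLp_one_rpow {α : Type*} [MeasurableSpace α] {m : Measure α} {ρ : α → ℝ} {γ : ℝ}
    (hγ : 0 < γ) (hρ : MemLp ρ (ENNReal.ofReal γ) m) (hρ0 : ∀ᵐ x ∂m, 0 ≤ ρ x) :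
    MemLp (fun x => ρ x ^ γ) 1 m := by
  have integrable : Integrable (fun x => ‖ρ x‖ ^ γ) m := by
    simpa only [ENNReal.toReal_ofReal hγ.le] using
      (integrable_norm_rpow_iff hρ.1 (by simpa using hγ) ENNReal.ofReal_ne_top).2 hρ
  refine memLp_one_iff_integrable.2 (integrable.congr ?_)
  filter_upwards [hρ0] with x hx
  rw [Real.norm_of_nonneg hx]

lemma memLp_of_tendsto_eLpNorm_sub {α E : Type*} [MeasurableSpace α] [NormedAddCommGroup E]
    {m : Measure α} {p : ℝ≥0∞} {fn : ℕ → α → E} {f : α → E} (hfn : ∀ n, MemLp (fn n) p m)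
    (hf : AEStronglyMeasurable f m)
    (h : Tendsto (fun n => eLpNorm (fun x => fn n x - f x) p m) atTop (𝓝 0)) : MemLp f p m := by
  obtain ⟨n, hn⟩ := (h.eventually (gt_mem_nhds zero_lt_one)).exists
  have sub : MemLp (fn n - f) p m := ⟨(hfn n).1.sub hf, hn.trans ENNReal.one_lt_top⟩
  simpa using (hfn n).sub sub

lemma IsTestVec.isTest_eval {φ : E3 → Fin 3 → ℝ} {Ω : Set E3}
    (h : IsTestVec ((⊤ : ℕ∞) : WithTop ℕ∞) Ω φ) (i : Fin 3) : IsTest Ω fun x => φ x i :=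
  ⟨contDiff_pi.1 h.1 i, h.2.1.comp_left (g := fun w : Fin 3 → ℝ => w i) rfl,
    (tsupport_comp_subset (g := fun w : Fin 3 → ℝ => w i) rfl φ).trans h.2.2⟩

lemma IsTest.integrable_mul {f φ : E3 → ℝ} (hφ : IsTest univ φ) (hf : LocallyIntegrable f) :
    Integrable fun x => f x * φ x :=
  hf.integrable_smul_right_of_hasCompactSupport hφ.1.continuous hφ.2.1

lemma locallyIntegrable_eval {F : E3 → Fin 3 → ℝ} (hF : LocallyIntegrable F) (i : Fin 3) :
    LocallyIntegrable fun x => F x i :=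
  fun x => (hF x).imp fun _ hs => ⟨hs.1, hs.2.eval i⟩

lemma isTestVec_one_of_forall_isTest {φ : Fin 3 → E3 → ℝ} (h : ∀ i, IsTest univ (φ i)) :
    IsTestVec 1 univ fun x i => φ i x := by
  refine ⟨contDiff_pi.2 fun i => (h i).contDiff_one, ?_, subset_univ _⟩
  refine HasCompactSupport.intro (isCompact_iUnion fun i => (h i).2.1) fun x hx => ?_
  ext i
  exact image_eq_zero_of_notMem_tsupport fun hi => hx (mem_iUnion.2 ⟨i, hi⟩)

lemma MemD012.exists_isD012Approx {u : E3 → Fin 3 → ℝ} {du : E3 → Fin 3 → Fin 3 → ℝ}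
    (h : MemD012 univ u du) : ∃ un : Fin 3 → ℕ → E3 → ℝ,
      ∀ i, IsD012Approx (fun x => u x i) (fun j x => du x i j) (un i) := by
  obtain ⟨hu, -, hdu, un, hun, hgrad, hlim⟩ := h
  rw [Measure.restrict_univ] at hdu
  simp only [Measure.restrict_univ] at hgrad hlim
  have test (i : Fin 3) (n : ℕ) : IsTest univ fun x => un n x i := (hun n).isTest_eval i
  have u_memLp : MemLp u 6 := memLp_of_tendsto_eLpNorm_sub
    (fun n => (hun n).1.continuous.memLp_of_hasCompactSupport (hun n).2.1)
    (locallyIntegrableOn_univ.1 hu).aestronglyMeasurable hlim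
  refine ⟨fun i n x => un n x i, fun i => ⟨test i, ?_, fun j => ?_⟩⟩
  · exact .of_le (fun n => (test i n).memLp 6) (u_memLp.eval i) hlim
      fun n => eLpNorm_mono fun x => norm_le_pi_norm (un n x - u x) i
  · exact .of_le (fun n => ((test i n).pd j).memLp 2) ((hdu.eval i).eval j) hgrad
      fun n => eLpNorm_mono fun x => (norm_le_pi_norm ((tgrad (un n) x - du x) i) j).trans
        (norm_le_pi_norm (tgrad (un n) x - du x) i)

lemma MemD01q.exists_tendstoInLp_pd {G : E3 → ℝ} {dG : E3 → Fin 3 → ℝ} {q : ℝ}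
    (h : MemD01q univ G dG q) : ∃ Gn : ℕ → E3 → ℝ, (∀ n, IsTest univ (Gn n)) ∧
      ∀ i, TendstoInLp (ENNReal.ofReal q) volume (fun n => pd (Gn n) i) atTop fun x => dG x i := by
  obtain ⟨-, hdG, Gn, hGn, hlim, -⟩ := h
  rw [Measure.restrict_univ] at hdG
  simp only [Measure.restrict_univ] at hlim
  exact ⟨Gn, hGn, fun i => .of_le (fun n => ((hGn n).pd i).memLp _) (hdG.eval i) hlim
    fun n => eLpNorm_mono fun x => norm_le_pi_norm ((fun i => pd (Gn n) i x) - dG x) i⟩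

/-- The tensor `S(∇v) - ρ v ⊗ v` of viscous stress minus convective momentum flux. -/
def momentumFlux (μ η : ℝ) (ρ : E3 → ℝ) (v : Fin 3 → E3 → ℝ) (dv : Fin 3 → Fin 3 → E3 → ℝ)
    (i j : Fin 3) (x : E3) : ℝ :=
  Smat μ η (fun a b => dv a b x) i j - ρ x * v i x * v j x

section EnergyBalance

variable {μ η : ℝ} {ρ : E3 → ℝ} {v : Fin 3 → E3 → ℝ} {dv : Fin 3 → Fin 3 → E3 → ℝ}
  {vn : Fin 3 → ℕ → E3 → ℝ}

lemma memLp_mul_mul (hρ : MemLp ρ 6) (hv : ∀ i, MemLp (v i) 6) (i j : Fin 3) :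
    MemLp (fun x => ρ x * v i x * v j x) 2 := by
  have momentum : MemLp (fun x => ρ x * v i x) 3 := (hv i).mul hρ
  exact (hv j).mul momentum

lemma sum_integral_momentumFlux_mul_eq (hρ : MemLp ρ 6)
    (hv : ∀ i, IsD012Approx (v i) (dv i) (vn i)) (hdiv : WeaklyDivFree fun i x => ρ x * v i x) :
    ∑ i, ∑ j, ∫ x, momentumFlux μ η ρ v dv i j x * dv i j x
      = ∑ i, ∑ j, ∫ x, Smat μ η (fun a b => dv a b x) i j * dv i j x := by
  have hdv (i j : Fin 3) : MemLp (dv i j) 2 := (hv i).memLp_grad j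
  have viscous (i j : Fin 3) : Integrable fun x => Smat μ η (fun a b => dv a b x) i j * dv i j x :=
    (memLp_Smat hdv i j).integrable_mul (hdv i j)
  have convective (i j : Fin 3) : Integrable fun x => ρ x * v i x * v j x * dv i j x :=
    (memLp_mul_mul hρ (fun k => (hv k).memLp) i j).integrable_mul (hdv i j)
  have convective_eq_zero (i : Fin 3) : ∑ j, ∫ x, ρ x * v i x * v j x * dv i j x = 0 := by
    simpa only [mul_right_comm] using
      hdiv.sum_integral_mul_grad_eq_zero (fun j => (hv j).memLp.mul hρ) (hv i)
  have split (i j : Fin 3) : ∫ x, momentumFlux μ η ρ v dv i j x * dv i j x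
      = (∫ x, Smat μ η (fun a b => dv a b x) i j * dv i j x)
        - ∫ x, ρ x * v i x * v j x * dv i j x := by
    simp only [momentumFlux, sub_mul]
    exact integral_sub (viscous i j) (convective i j)
  simp only [split, Finset.sum_sub_distrib, convective_eq_zero, sub_zero]

lemma WeakMomentumBalance.sum_integral_Smat_mul_eq_zero {γ : ℝ} {g : Fin 3 → E3 → ℝ}
    {Gn : ℕ → E3 → ℝ} {r q : ℝ≥0∞} [ENNReal.HolderTriple r q (6 / 5)]
    (h : WeakMomentumBalance (fun x => ρ x ^ γ) (momentumFlux μ η ρ v dv) fun i x => ρ x * g i x)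
    (hdiv : WeaklyDivFree fun i x => ρ x * v i x)
    (hv : ∀ i, IsD012Approx (v i) (dv i) (vn i)) (hγ : 5 ≤ γ) (hρ0 : ∀ᵐ x, 0 ≤ ρ x)
    (hρ6 : MemLp ρ 6) (hρr : MemLp ρ r) (hργ : MemLp (fun x => ρ x ^ γ) 1)
    (hGn : ∀ n, IsTest univ (Gn n))
    (hg : ∀ i, TendstoInLp q volume (fun n => pd (Gn n) i) atTop (g i)) :
    ∑ i, ∑ j, ∫ x, Smat μ η (fun a b => dv a b x) i j * dv i j x = 0 := by
  have v6 (i : Fin 3) : MemLp (v i) 6 := (hv i).memLp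
  have flux (i j : Fin 3) : MemLp (momentumFlux μ η ρ v dv i j) 2 :=
    (memLp_Smat (fun a b => (hv a).memLp_grad b) i j).sub (memLp_mul_mul hρ6 v6 i j)
  have force (i : Fin 3) : MemLp (fun x => ρ x * g i x) (6 / 5) := (hg i).memLp_lim.mul hρr
  have pressure : MemLp (fun x => ρ x ^ γ) 2 := h.memLp_two hργ flux force
  have energy := h.test_isD012Approx pressure flux force hv
  have pressure_work : ∑ i, ∫ x, ρ x ^ γ * dv i i x = 0 := by
    simpa only [mul_comm] using sum_integral_mul_rpow_eq_zero hγ hρ6 hρ0 pressure hv hdiv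
  rw [pressure_work, sum_integral_momentumFlux_mul_eq hρ6 hv hdiv,
    hdiv.sum_integral_mul_mul_eq_zero v6 hρr hGn hg, sub_zero] at energy
  exact energy.symm

end EnergyBalance

namespace WeakSolution

variable {μ η : ℝ} {p : ℝ → ℝ} {G ρ : E3 → ℝ} {dG u : E3 → Fin 3 → ℝ}
  {du : E3 → Fin 3 → Fin 3 → ℝ}

lemma weaklyDivFree (h : WeakSolution univ μ η p G dG ρ u du) :
    WeaklyDivFree fun i x => ρ x * u x i := by
  intro φ hφ
  have loc := locallyIntegrableOn_univ.1 (closure_univ (X := E3) ▸ h.ρu_locInt)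
  have integrable (i : Fin 3) : Integrable fun x => ρ x * u x i * pd φ i x :=
    (hφ.pd i).integrable_mul (locallyIntegrable_eval loc i)
  rw [← integral_finsetSum _ fun i _ => integrable i, ← h.mass φ hφ.1 hφ.2.1,
    Measure.restrict_univ]
  simp only [Finset.mul_sum, mul_assoc]

lemma locallyIntegrable_mul_mul (h : WeakSolution univ μ η p G dG ρ u du) (i j : Fin 3) :
    LocallyIntegrable fun x => ρ x * u x i * u x j := by
  have meas (k : Fin 3) : AEMeasurable fun x => u x k := aemeasurable_pi_iff.1 h.aemeas_u k
  refine (locallyIntegrableOn_univ.1 h.ρu2_locInt).mono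
    ((h.aemeas_ρ.mul (meas i)).mul (meas j)).aestronglyMeasurable (ae_of_all _ fun x => ?_)
  have sq_le (k : Fin 3) : u x k ^ 2 ≤ ∑ l, u x l ^ 2 :=
    Finset.single_le_sum (fun l _ => sq_nonneg (u x l)) (Finset.mem_univ k)
  have mul_le : |u x i * u x j| ≤ ∑ l, u x l ^ 2 :=
    abs_le.2 ⟨by nlinarith [sq_le i, sq_le j, sq_nonneg (u x i + u x j)],
      by nlinarith [sq_le i, sq_le j, sq_nonneg (u x i - u x j)]⟩
  rw [mul_assoc, norm_mul (ρ x), norm_mul (ρ x)]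
  gcongr
  exact mul_le.trans (Real.le_norm_self _)

lemma weakMomentumBalance (h : WeakSolution univ μ η p G dG ρ u du) :
    WeakMomentumBalance (fun x => p (ρ x))
      (momentumFlux μ η ρ (fun i x => u x i) fun i j x => du x i j) fun i x => ρ x * dG x i := by
  intro φ hφ
  have pressure (i : Fin 3) : Integrable fun x => p (ρ x) * pd (φ i) i x :=
    ((hφ i).pd i).integrable_mul (locallyIntegrableOn_univ.1 h.pρ_locInt)
  have convection (i j : Fin 3) : Integrable fun x => ρ x * u x i * u x j * pd (φ i) j x :=
    ((hφ i).pd j).integrable_mul (h.locallyIntegrable_mul_mul i j)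
  have viscosity (i j : Fin 3) : Integrable fun x => Smat μ η (du x) i j * pd (φ i) j x := by
    have grad : MemLp du 2 := by simpa only [Measure.restrict_univ] using h.u_D012.2.2.1
    exact ((hφ i).pd j).integrable_mul
      ((memLp_Smat (fun a b => (grad.eval a).eval b) i j).locallyIntegrable one_le_two)
  have force (i : Fin 3) : Integrable fun x => ρ x * dG x i * φ i x :=
    (hφ i).integrable_mul (locallyIntegrable_eval (locallyIntegrableOn_univ.1 h.ρdG_locInt) i)
  have momentum := h.momentum _ (isTestVec_one_of_forall_isTest hφ)
  simp only [Measure.restrict_univ, tgrad, Finset.mul_sum] at momentum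
  rw [integral_add (integrable_finsetSum _ fun i _ => integrable_finsetSum _ fun j _ =>
      convection i j) (integrable_finsetSum _ fun i _ => pressure i),
    integral_sum_sum convection, integral_sum_sum viscosity,
    integral_finsetSum _ fun i _ => pressure i, integral_finsetSum _ fun i _ => force i] at momentum
  have split (i j : Fin 3) :
      ∫ x, momentumFlux μ η ρ (fun i x => u x i) (fun i j x => du x i j) i j x * pd (φ i) j x
        = (∫ x, Smat μ η (du x) i j * pd (φ i) j x)
          - ∫ x, ρ x * u x i * u x j * pd (φ i) j x := by
    simp only [momentumFlux, sub_mul]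
    exact integral_sub (viscosity i j) (convection i j)
  simp only [split, Finset.sum_sub_distrib]
  linarith

end WeakSolution

/-- **Theorem 5.** Let `(ρ, u)` be a weak solution of the stationary isentropic system on `ℝ³`
with `γ ≥ 6` and `G ∈ D₀^{1,q}(ℝ³)` for some `6γ/(5γ−6) ≤ q ≤ 3/2`.
If `ρ ∈ L⁶ ∩ L^γ(ℝ³)`, then `u = 0` a.e. -/
theorem liouville_isentropic_L6_Lgamma
    (μ η γ q : ℝ) (hμ : 0 < μ) (hη : 0 ≤ η) (hγ : 6 ≤ γ)
    (hq1 : 6 * γ / (5 * γ - 6) ≤ q) (hq2 : q ≤ 3 / 2)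
    (G : E3 → ℝ) (dG : E3 → Fin 3 → ℝ)
    (ρ : E3 → ℝ) (u : E3 → Fin 3 → ℝ) (du : E3 → Fin 3 → Fin 3 → ℝ)
    (hG : MemD01q univ G dG q)
    (hsol : IsentropicWeakSolution μ η γ G dG ρ u du)
    (hρ6 : MemLp ρ 6 volume) (hργ : MemLp ρ (ENNReal.ofReal γ) volume) :
    ∀ᵐ x, u x = 0 := by
  obtain ⟨r, h6r, hrγ, _⟩ := exists_holderTriple_six_fifths hγ hq1 hq2
  obtain ⟨un, hun⟩ := hsol.u_D012.exists_isD012Approx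
  obtain ⟨Gn, hGn, hGlim⟩ := hG.exists_tendstoInLp_pd
  have ρ_nonneg : ∀ᵐ x, 0 ≤ ρ x := by simpa only [Measure.restrict_univ] using hsol.ρ_nonneg
  have ρ_memLp : MemLp ρ r := memLp_of_exponent_le_of_le h6r hrγ (by norm_num) (by simp) hρ6 hργ
  have pressure_memLp : MemLp (fun x => ρ x ^ γ) 1 :=
    memLp_one_rpow (by linarith) hργ ρ_nonneg
  have dissipation := hsol.weakMomentumBalance.sum_integral_Smat_mul_eq_zero hsol.weaklyDivFree
    hun (by linarith) ρ_nonneg hρ6 ρ_memLp pressure_memLp hGn hGlim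
  have components := ae_eq_zero_of_sum_integral_Smat_mul_eq_zero hμ hη hun dissipation
  filter_upwards [ae_all_iff.2 components] with x hx
  exact funext hx
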